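/- With the same setup, if the chain {X_n} is geometrically ergodic and ∫|h(x)|^{2+ε} p(x)dx < ∞ for some ε > 0, then √n(Î_n − I) converges weakly to a normal distribution N(0, σ²(h)) with σ²(h) = (C_{11} + I²C_{22} − 2I C_{12})/r², where r = ∫σ(x)p(x)dx and C_{11}, C_{22}, C_{12} are the asymptotic (co)variances of the functionals hσ and σ along the chain. -/

import Mathlib

open MeasureTheory ProbabilityTheory Filter

/-- `n`-step iterate of a Markov kernel. -/
noncomputable def kernelIter {E : Type*} [MeasurableSpace E]
    (κ : Kernel E E) : ℕ → Kernel E E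
  | 0 => Kernel.id
  | n + 1 => κ ∘ₖ kernelIter κ n

/-- Action of the `n`-step kernel on a function: `(P^n g)(x)`. -/
noncomputable def kernelOp {E : Type*} [MeasurableSpace E]
    (κ : Kernel E E) (n : ℕ) (g : E → ℝ) (x : E) : ℝ :=
  ∫ y, g y ∂(kernelIter κ n x)

/-- Stationary lag-`n` covariance `Cov_ρ(f(X_0), g(X_n))`. -/
noncomputable def kernelCov {E : Type*} [MeasurableSpace E]
    (κ : Kernel E E) (ρ : Measure E) (f g : E → ℝ) (n : ℕ) : ℝ :=
  (∫ x, f x * kernelOp κ n g x ∂ρ) - (∫ x, f x ∂ρ) * ∫ x, g x ∂ρ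

/-- Geometric ergodicity: the `n`-step transition probabilities converge to the
invariant distribution geometrically fast. -/
def GeometricallyErgodic {E : Type*} [MeasurableSpace E]
    (κ : Kernel E E) (ρ : Measure E) : Prop :=
  ∃ C : E → ℝ, ∃ r : ℝ, 0 ≤ r ∧ r < 1 ∧
    ∀ x : E, ∀ n : ℕ, ∀ A : Set E, MeasurableSet A →
      |(kernelIter κ n x A).toReal - (ρ A).toReal| ≤ C x * r ^ n

/-- `X` is a Markov chain with transition kernel `κ` under `P`. -/
def IsMarkovChain {Ω E : Type*} [MeasurableSpace Ω] [MeasurableSpace E]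
    (P : Measure Ω) (X : ℕ → Ω → E) (κ : Kernel E E) : Prop :=
  (∀ n, Measurable (X n)) ∧
  ∀ n : ℕ, ∀ A : Set E, MeasurableSet A →
    P[(fun ω => Set.indicator A (fun _ => (1 : ℝ)) (X (n + 1) ω)) |
        MeasurableSpace.comap (fun ω (i : Fin (n + 1)) => X i ω) MeasurableSpace.pi]
      =ᵐ[P] fun ω => (κ (X n ω) A).toReal

section MarkovOperator

variable {E : Type*} [MeasurableSpace E]

instance kernelIter_isMarkovKernel (κ : Kernel E E) [IsMarkovKernel κ] (n : ℕ) :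
    IsMarkovKernel (kernelIter κ n) := by
  induction n with
  | zero => rw [kernelIter]; infer_instance
  | succ n ih => rw [kernelIter]; infer_instance

theorem kernelIter_succ_eq_comp (κ : Kernel E E) (n : ℕ) :
    kernelIter κ (n + 1) = kernelIter κ n ∘ₖ κ := by
  induction n with
  | zero => simp [kernelIter]
  | succ n ih =>
    change κ ∘ₖ kernelIter κ (n + 1) = (κ ∘ₖ kernelIter κ n) ∘ₖ κ
    rw [ih, Kernel.comp_assoc]

theorem kernelIter_invariant {κ : Kernel E E} {ρ : Measure E} (hκ : Kernel.Invariant κ ρ) (n : ℕ) :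
    Kernel.Invariant (kernelIter κ n) ρ := by
  induction n with
  | zero => simp [kernelIter, Kernel.Invariant]
  | succ n ih => exact hκ.comp ih

theorem measurable_integral_kernel (η : Kernel E E) [IsMarkovKernel η] {g : E → ℝ}
    (hg : Measurable g) : Measurable fun x => ∫ y, g y ∂η x :=
  (hg.stronglyMeasurable.integral_kernel (κ := η)).measurable

theorem integrable_of_measurable_of_abs_le {ν : Measure E} [IsFiniteMeasure ν] {g : E → ℝ} {c : ℝ}
    (hg : Measurable g) (hc : ∀ x, |g x| ≤ c) : Integrable g ν :=
  Integrable.of_bound hg.aestronglyMeasurable c (ae_of_all _ hc)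

theorem abs_integral_kernel_le (η : Kernel E E) [IsMarkovKernel η] {g : E → ℝ} {c : ℝ}
    (hc : ∀ x, |g x| ≤ c) (x : E) : |∫ y, g y ∂η x| ≤ c := by
  simpa using norm_integral_le_of_norm_le_const (μ := η x) (f := g) (ae_of_all _ hc)

theorem ae_integrable_of_invariant {η : Kernel E E} {ρ : Measure E} (hη : Kernel.Invariant η ρ)
    {g : E → ℝ} (hg : Integrable g ρ) : ∀ᵐ x ∂ρ, Integrable g (η x) := by
  rw [← hη.def] at hg
  exact Measure.ae_integrable_of_integrable_comp hg

theorem integrable_integral_of_integrable_compProd {η : Kernel E E} [IsMarkovKernel η]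
    {ρ : Measure E} [SFinite ρ] {Φ : E × E → ℝ} (hΦ : Integrable Φ (ρ ⊗ₘ η)) :
    Integrable (fun x => ∫ y, Φ (x, y) ∂η x) ρ := by
  simpa using Integrable.integral_compProd (κ := Kernel.const Unit ρ)
    (η := Kernel.prodMkLeft Unit η) (a := ()) hΦ

theorem integrable_comp_snd_of_invariant {η : Kernel E E} [IsMarkovKernel η] {ρ : Measure E}
    [SFinite ρ] (hη : Kernel.Invariant η ρ) {g : E → ℝ} (hg : Integrable g ρ) :
    Integrable (fun p : E × E => g p.2) (ρ ⊗ₘ η) := by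
  rw [← hη.def] at hg
  exact (Measure.integrable_compProd_snd_iff hg.1).2 hg

theorem integral_integral_of_invariant {η : Kernel E E} [IsMarkovKernel η] {ρ : Measure E}
    [SFinite ρ] (hη : Kernel.Invariant η ρ) {g : E → ℝ} (hg : Integrable g ρ) :
    ∫ x, ∫ y, g y ∂η x ∂ρ = ∫ x, g x ∂ρ := by
  have h := integrable_comp_snd_of_invariant hη hg
  rw [← Measure.integral_compProd (f := fun p : E × E => g p.2) h]
  conv_rhs => rw [← hη.def, ← Measure.snd_compProd, Measure.snd]
  rw [integral_map measurable_snd.aemeasurable]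
  rw [← Measure.snd, Measure.snd_compProd, hη.def]
  exact hg.1

theorem integrable_integral_of_invariant {η : Kernel E E} [IsMarkovKernel η] {ρ : Measure E}
    [SFinite ρ] (hη : Kernel.Invariant η ρ) {g : E → ℝ} (hg : Integrable g ρ) :
    Integrable (fun x => ∫ y, g y ∂η x) ρ := by
  have h := integrable_comp_snd_of_invariant hη hg
  exact integrable_integral_of_integrable_compProd h

theorem ae_ae_of_invariant {η : Kernel E E} {ρ : Measure E} (hη : Kernel.Invariant η ρ)
    {p : E → Prop} (hp : ∀ᵐ x ∂ρ, p x) : ∀ᵐ x ∂ρ, ∀ᵐ y ∂η x, p y := by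
  rw [← hη.def] at hp
  exact Measure.ae_ae_of_ae_comp hp

theorem kernelOp_zero (κ : Kernel E E) {g : E → ℝ} (hg : Measurable g) : kernelOp κ 0 g = g := by
  funext x
  simp [kernelOp, kernelIter, Kernel.id_apply, integral_dirac' _ _ hg.stronglyMeasurable]

theorem kernelOp_succ (κ : Kernel E E) [IsMarkovKernel κ] (n : ℕ) {g : E → ℝ} {c : ℝ}
    (hg : Measurable g) (hc : ∀ x, |g x| ≤ c) (x : E) :
    kernelOp κ (n + 1) g x = ∫ y, kernelOp κ n g y ∂κ x := by
  simp only [kernelOp, kernelIter_succ_eq_comp]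
  rw [Kernel.integral_comp]
  exact integrable_of_measurable_of_abs_le hg hc

theorem measurable_kernelOp (κ : Kernel E E) [IsMarkovKernel κ] (n : ℕ) {g : E → ℝ}
    (hg : Measurable g) : Measurable (kernelOp κ n g) :=
  measurable_integral_kernel _ hg

theorem abs_integral_sub_le_of_measureReal_sub_le {μ ν : Measure E} [IsProbabilityMeasure μ]
    [IsProbabilityMeasure ν] {δ : ℝ}
    (h : ∀ A, MeasurableSet A → |μ.real A - ν.real A| ≤ δ) {g : E → ℝ} (hg : Measurable g)
    (h0 : ∀ x, 0 ≤ g x) (h1 : ∀ x, g x ≤ 1) : |∫ x, g x ∂μ - ∫ x, g x ∂ν| ≤ δ := by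
  have habs : ∀ x, |g x| ≤ 1 := fun x => by rw [abs_of_nonneg (h0 x)]; exact h1 x
  have hanti (ξ : Measure E) [IsProbabilityMeasure ξ] :
      IntegrableOn (fun t => ξ.real {a | t ≤ g a}) (Set.Ioc 0 1) volume := by
    have : Antitone fun t => ξ.real {a | t ≤ g a} :=
      fun s t hst => measureReal_mono fun a (ha : t ≤ g a) => hst.trans ha
    exact (this.antitoneOn _).integrableOn_isCompact isCompact_Icc |>.mono_set Set.Ioc_subset_Icc_self
  rw [(integrable_of_measurable_of_abs_le hg habs).integral_eq_integral_Ioc_meas_le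
      (ae_of_all _ h0) (ae_of_all _ h1),
    (integrable_of_measurable_of_abs_le hg habs).integral_eq_integral_Ioc_meas_le
      (ae_of_all _ h0) (ae_of_all _ h1), ← integral_sub (hanti μ) (hanti ν)]
  have := norm_setIntegral_le_of_norm_le_const (μ := volume) (s := Set.Ioc (0 : ℝ) 1) (C := δ)
    (f := fun t => μ.real {a | t ≤ g a} - ν.real {a | t ≤ g a}) (by simp)
    (fun t _ => h _ (measurableSet_le measurable_const hg))
  simpa using this

end MarkovOperator

section Mixing

variable {E : Type*} [MeasurableSpace E]

/-- Probability that the chain started at `x` does not visit `B` during `0, …, n`. -/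
noncomputable def avoidProb (κ : Kernel E E) (B : Set E) : ℕ → E → ℝ
  | 0 => Bᶜ.indicator 1
  | n + 1 => Bᶜ.indicator fun x => ∫ y, avoidProb κ B n y ∂κ x

/-- Expectation of `r ^ (n - τ)` on `τ ≤ n`, where `τ` is the first visit to `B`
of the chain started at `x`. -/
noncomputable def discountedHit (κ : Kernel E E) (B : Set E) (r : ℝ) : ℕ → E → ℝ
  | 0 => B.indicator 1
  | n + 1 => fun x => B.indicator (fun _ => r ^ (n + 1)) x +
      Bᶜ.indicator (fun x => ∫ y, discountedHit κ B r n y ∂κ x) x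

variable {κ : Kernel E E} {B : Set E} {r : ℝ}

theorem avoidProb_succ_of_notMem {x : E} (hx : x ∉ B) (n : ℕ) :
    avoidProb κ B (n + 1) x = ∫ y, avoidProb κ B n y ∂κ x := by
  simp [avoidProb, hx]

theorem discountedHit_succ_of_notMem {x : E} (hx : x ∉ B) (n : ℕ) :
    discountedHit κ B r (n + 1) x = ∫ y, discountedHit κ B r n y ∂κ x := by
  simp [discountedHit, hx]

theorem avoidProb_nonneg (n : ℕ) (x : E) : 0 ≤ avoidProb κ B n x := by
  induction n generalizing x with
  | zero => exact Set.indicator_nonneg (fun _ _ => zero_le_one) x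
  | succ n ih => exact Set.indicator_nonneg (fun _ _ => integral_nonneg ih) x

theorem discountedHit_nonneg (hr0 : 0 ≤ r) (n : ℕ) (x : E) : 0 ≤ discountedHit κ B r n x := by
  induction n generalizing x with
  | zero => exact Set.indicator_nonneg (fun _ _ => zero_le_one) x
  | succ n ih =>
    exact add_nonneg (Set.indicator_nonneg (fun _ _ => by positivity) x)
      (Set.indicator_nonneg (fun _ _ => integral_nonneg ih) x)

variable [IsMarkovKernel κ]

theorem measurable_avoidProb (hB : MeasurableSet B) (n : ℕ) : Measurable (avoidProb κ B n) := by
  induction n with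
  | zero => exact measurable_one.indicator hB.compl
  | succ n ih => exact (measurable_integral_kernel κ ih).indicator hB.compl

theorem measurable_discountedHit (hB : MeasurableSet B) (n : ℕ) :
    Measurable (discountedHit κ B r n) := by
  induction n with
  | zero => exact measurable_one.indicator hB
  | succ n ih =>
    exact (measurable_const.indicator hB).add
      ((measurable_integral_kernel κ ih).indicator hB.compl)

theorem abs_avoidProb_le (n : ℕ) (x : E) : |avoidProb κ B n x| ≤ 1 := by
  induction n generalizing x with
  | zero => by_cases hx : x ∈ B <;> simp [avoidProb, hx]
  | succ n ih =>
    by_cases hx : x ∈ B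
    · simp [avoidProb, hx]
    · simpa [avoidProb, hx] using abs_integral_kernel_le κ ih x

theorem abs_discountedHit_le (hr0 : 0 ≤ r) (hr1 : r ≤ 1) (n : ℕ) (x : E) :
    |discountedHit κ B r n x| ≤ 1 := by
  induction n generalizing x with
  | zero => by_cases hx : x ∈ B <;> simp [discountedHit, hx]
  | succ n ih =>
    by_cases hx : x ∈ B
    · simpa [discountedHit, hx, abs_of_nonneg hr0] using pow_le_one₀ hr0 hr1
    · simpa [discountedHit, hx] using abs_integral_kernel_le κ ih x

theorem integrable_avoidProb (hB : MeasurableSet B) (ν : Measure E) [IsFiniteMeasure ν] (n : ℕ) :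
    Integrable (avoidProb κ B n) ν :=
  integrable_of_measurable_of_abs_le (measurable_avoidProb hB n) (abs_avoidProb_le n)

theorem integrable_discountedHit (hB : MeasurableSet B) (hr0 : 0 ≤ r) (hr1 : r ≤ 1)
    (ν : Measure E) [IsFiniteMeasure ν] (n : ℕ) : Integrable (discountedHit κ B r n) ν :=
  integrable_of_measurable_of_abs_le (measurable_discountedHit hB n) (abs_discountedHit_le hr0 hr1 n)

theorem discountedHit_add_avoidProb_succ (hB : MeasurableSet B) (hr0 : 0 ≤ r) (hr1 : r ≤ 1)
    (n : ℕ) (x : E) :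
    discountedHit κ B r (n + 1) x + avoidProb κ B (n + 1) x =
      r * discountedHit κ B r n x + avoidProb κ B n x := by
  have hadd (n : ℕ) (x : E) : ∫ y, discountedHit κ B r n y ∂κ x + ∫ y, avoidProb κ B n y ∂κ x =
      ∫ y, (discountedHit κ B r n y + avoidProb κ B n y) ∂κ x :=
    (integral_add (integrable_discountedHit hB hr0 hr1 _ n) (integrable_avoidProb hB _ n)).symm
  induction n generalizing x with
  | zero =>
    by_cases hx : x ∈ B
    · simp [discountedHit, avoidProb, hx]
    · have h := hadd 0 x
      have h1 (y : E) : discountedHit κ B r 0 y + avoidProb κ B 0 y = 1 := by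
        by_cases hy : y ∈ B <;> simp [discountedHit, avoidProb, hy]
      simp_rw [h1] at h
      simpa [discountedHit, avoidProb, hx] using h
  | succ n ih =>
    by_cases hx : x ∈ B
    · simp [discountedHit, avoidProb, hx, pow_succ']
    · have h := hadd (n + 1) x
      simp_rw [ih] at h
      rw [integral_add ((integrable_discountedHit hB hr0 hr1 _ n).const_mul r)
        (integrable_avoidProb hB _ n), integral_const_mul] at h
      rw [discountedHit_succ_of_notMem hx, discountedHit_succ_of_notMem hx,
        avoidProb_succ_of_notMem hx, avoidProb_succ_of_notMem hx]
      exact h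

theorem ae_kernelOp_le_avoidProb_add_discountedHit {ρ : Measure E} [IsProbabilityMeasure ρ]
    (hκ : Kernel.Invariant κ ρ) (hB : MeasurableSet B) (hr0 : 0 ≤ r) (hr1 : r ≤ 1) {M : ℝ}
    {g : E → ℝ} {b : ℝ} (hg : Measurable g) (hgb : ∀ x, |g x| ≤ 1)
    (hgB : ∀ x ∉ B, g x = 0)
    (h : ∀ n, ∀ᵐ x ∂ρ, x ∈ B → |kernelOp κ n g x - b| ≤ M * r ^ n) (n : ℕ) :
    ∀ᵐ x ∂ρ, kernelOp κ n g x ≤ b * (1 - avoidProb κ B n x) + M * discountedHit κ B r n x := by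
  induction n with
  | zero =>
    filter_upwards [h 0] with x hx
    by_cases hxB : x ∈ B
    · have := (abs_le.1 (hx hxB)).2
      simp [discountedHit, avoidProb, hxB] at this ⊢
      linarith
    · simp [discountedHit, avoidProb, hxB, kernelOp_zero κ hg, hgB x hxB]
  | succ n ih =>
    filter_upwards [h (n + 1), ae_ae_of_invariant hκ ih] with x hx ihx
    by_cases hxB : x ∈ B
    · have := (abs_le.1 (hx hxB)).2
      simp [discountedHit, avoidProb, hxB] at this ⊢
      linarith
    · have h1 : Integrable (fun y => b * (1 - avoidProb κ B n y)) (κ x) :=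
        ((integrable_const _).sub (integrable_avoidProb hB _ n)).const_mul _
      have h2 : Integrable (fun y => M * discountedHit κ B r n y) (κ x) :=
        (integrable_discountedHit hB hr0 hr1 _ n).const_mul _
      have h3 := integral_mono_ae (integrable_of_measurable_of_abs_le (measurable_kernelOp κ n hg)
        (abs_integral_kernel_le _ hgb)) (h1.add h2) ihx
      simp only [Pi.add_apply] at h3
      rw [integral_add h1 h2, integral_const_mul, integral_const_mul,
        integral_sub (integrable_const _) (integrable_avoidProb hB _ n)] at h3
      rw [kernelOp_succ κ n hg hgb]
      simpa [discountedHit, avoidProb, hxB] using h3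

theorem ae_abs_kernelOp_sub_le {ρ : Measure E} [IsProbabilityMeasure ρ]
    (hκ : Kernel.Invariant κ ρ) (hB : MeasurableSet B) (hr0 : 0 ≤ r) (hr1 : r ≤ 1) {M : ℝ}
    {g : E → ℝ} {b : ℝ} (hg : Measurable g) (hgb : ∀ x, |g x| ≤ 1) (hg1 : ∀ x, |g x - b| ≤ 1)
    (h : ∀ n, ∀ᵐ x ∂ρ, x ∈ B → |kernelOp κ n g x - b| ≤ M * r ^ n) (n : ℕ) :
    ∀ᵐ x ∂ρ, |kernelOp κ n g x - b| ≤ avoidProb κ B n x + M * discountedHit κ B r n x := by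
  induction n with
  | zero =>
    filter_upwards [h 0] with x hx
    by_cases hxB : x ∈ B
    · simpa [discountedHit, avoidProb, hxB] using hx hxB
    · simpa [discountedHit, avoidProb, hxB, kernelOp_zero κ hg] using hg1 x
  | succ n ih =>
    filter_upwards [h (n + 1), ae_ae_of_invariant hκ ih] with x hx ihx
    by_cases hxB : x ∈ B
    · simpa [discountedHit, avoidProb, hxB] using hx hxB
    · have h0 : Integrable (kernelOp κ n g) (κ x) :=
        integrable_of_measurable_of_abs_le (measurable_kernelOp κ n hg)
        (abs_integral_kernel_le _ hgb)
      have h2 : Integrable (fun y => M * discountedHit κ B r n y) (κ x) :=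
        (integrable_discountedHit hB hr0 hr1 _ n).const_mul _
      have h3 := integral_mono_ae (h0.sub (integrable_const b)).abs
        ((integrable_avoidProb hB _ n).add h2) ihx
      have h4 := (abs_integral_le_integral_abs (μ := κ x)
        (f := fun y => kernelOp κ n g y - b)).trans h3
      simp only [Pi.add_apply] at h4
      rw [integral_add (integrable_avoidProb hB _ n) h2, integral_const_mul,
        integral_sub h0 (integrable_const b)] at h4
      rw [kernelOp_succ κ n hg hgb]
      simpa [discountedHit, avoidProb, hxB] using h4

theorem exists_uniform_set {ρ : Measure E} [IsProbabilityMeasure ρ]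
    (hgeo : GeometricallyErgodic κ ρ) :
    ∃ (B : Set E) (M r : ℝ), MeasurableSet B ∧ 0 < ρ.real B ∧ 0 ≤ M ∧ 0 ≤ r ∧ r < 1 ∧
      ∀ g : E → ℝ, Measurable g → (∀ x, 0 ≤ g x) → (∀ x, g x ≤ 1) → ∀ n, ∀ᵐ x ∂ρ, x ∈ B →
        |kernelOp κ n g x - ∫ y, g y ∂ρ| ≤ M * r ^ n := by
  obtain ⟨C, r, hr0, hr1, hC⟩ := hgeo
  let S : ℕ → Set E := fun m => {x | C x ≤ m}
  have hSmono : Monotone S := fun m k hmk x (hx : C x ≤ m) => hx.trans (by exact_mod_cast hmk)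
  have hS : ⋃ m, S m = Set.univ := Set.eq_univ_of_forall fun x =>
    Set.mem_iUnion.2 (exists_nat_ge (C x))
  obtain ⟨m, hm⟩ : ∃ m, ρ (S m) ≠ 0 := by
    by_contra! h0
    have := hSmono.measure_iUnion (μ := ρ)
    simp [hS, h0] at this
  refine ⟨toMeasurable ρ (S m), m, r, measurableSet_toMeasurable _ _, ?_, by positivity, hr0, hr1,
    fun g hg h0 h1 n => ?_⟩
  · rw [measureReal_def, measure_toMeasurable]
    exact ENNReal.toReal_pos hm (measure_ne_top _ _)
  have hu : MeasurableSet {x | |kernelOp κ n g x - ∫ y, g y ∂ρ| ≤ m * r ^ n} :=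
    measurableSet_le ((measurable_kernelOp κ n hg).sub_const _).abs measurable_const
  have hsub : S m ⊆ {x | |kernelOp κ n g x - ∫ y, g y ∂ρ| ≤ m * r ^ n} := fun x hx =>
    abs_integral_sub_le_of_measureReal_sub_le (μ := kernelIter κ n x) (ν := ρ)
      (fun A hA => (hC x n A hA).trans (mul_le_mul_of_nonneg_right hx (by positivity))) hg h0 h1
  have h := Measure.measure_toMeasurable_inter hu.compl (measure_ne_top ρ (S m))
  rw [(Set.disjoint_compl_right_iff_subset.2 hsub).inter_eq, measure_empty] at h
  rw [ae_iff]
  convert h using 2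
  ext x
  simp

theorem exists_integral_abs_kernelOp_sub_le {ρ : Measure E} [IsProbabilityMeasure ρ]
    (hκ : Kernel.Invariant κ ρ) (hgeo : GeometricallyErgodic κ ρ) :
    ∃ K l : ℝ, 0 ≤ K ∧ 0 < l ∧ l < 1 ∧ ∀ g : E → ℝ, Measurable g → (∀ x, 0 ≤ g x) →
      (∀ x, g x ≤ 1) → ∀ n, ∫ x, |kernelOp κ n g x - ∫ y, g y ∂ρ| ∂ρ ≤ K * l ^ n := by
  obtain ⟨B, M, r, hB, hc, hM, hr0, hr1, h⟩ := exists_uniform_set hgeo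
  set c := ρ.real B with hcdef
  set q : ℕ → ℝ := fun n => ∫ x, avoidProb κ B n x ∂ρ
  set s : ℕ → ℝ := fun n => ∫ x, discountedHit κ B r n x ∂ρ
  have hq0 (n) : 0 ≤ q n := integral_nonneg (avoidProb_nonneg n)
  have hs0 (n) : 0 ≤ s n := integral_nonneg (discountedHit_nonneg hr0 n)
  have hrec (n) : s (n + 1) + q (n + 1) = r * s n + q n := by
    simp only [s, q]
    rw [← integral_add (integrable_discountedHit hB hr0 hr1.le _ _) (integrable_avoidProb hB _ _),
      ← integral_const_mul, ← integral_add ((integrable_discountedHit hB hr0 hr1.le _ _).const_mul r)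
      (integrable_avoidProb hB _ _)]
    simp_rw [discountedHit_add_avoidProb_succ hB hr0 hr1.le]
  have hqs (n) : c * q n ≤ M * s n := by
    have hgB : Measurable (B.indicator (1 : E → ℝ)) := measurable_one.indicator hB
    have hint : ∫ x, B.indicator (1 : E → ℝ) x ∂ρ = c := by
      rw [integral_indicator_one hB]
    have habs (x) : |B.indicator (1 : E → ℝ) x| ≤ 1 := by by_cases hx : x ∈ B <;> simp [hx]
    have := ae_kernelOp_le_avoidProb_add_discountedHit hκ hB hr0 hr1.le (M := M) (b := c) hgB
      habs (fun x hx => by simp [hx])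
      (by
        simpa only [hint] using h _ hgB (fun x => Set.indicator_nonneg (fun _ _ => zero_le_one) x)
          (fun x => (abs_le.1 (habs x)).2)) n
    have h1 : Integrable (fun y => c * (1 - avoidProb κ B n y)) ρ :=
      ((integrable_const _).sub (integrable_avoidProb hB _ n)).const_mul _
    have h2 : Integrable (fun y => M * discountedHit κ B r n y) ρ :=
      (integrable_discountedHit hB hr0 hr1.le _ n).const_mul _
    have hk : Integrable (B.indicator (1 : E → ℝ)) ρ := integrable_of_measurable_of_abs_le hgB habs
    have h3 := integral_mono_ae (integrable_integral_of_invariant (kernelIter_invariant hκ n) hk)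
      (h1.add h2) this
    rw [integral_integral_of_invariant (kernelIter_invariant hκ n) hk, hint] at h3
    simp only [Pi.add_apply] at h3
    rw [integral_add h1 h2, integral_const_mul, integral_const_mul,
      integral_sub (integrable_const _) (integrable_avoidProb hB _ n)] at h3
    simp only [integral_const, probReal_univ, smul_eq_mul, mul_one] at h3
    simp only [s, q]
    linarith
  set l : ℝ := 1 - (1 - r) / (1 + M / c) with hl
  have hMc : 0 ≤ M / c := by positivity
  have hl1 : l < 1 := by
    have : 0 < (1 - r) / (1 + M / c) := div_pos (by linarith) (by linarith)
    linarith
  have hl0 : 0 ≤ l := by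
    have : (1 - r) / (1 + M / c) ≤ 1 := by rw [div_le_one (by linarith)]; linarith
    linarith
  have hdecay (n) : s n + q n ≤ l ^ n := by
    induction n with
    | zero =>
      simp only [s, q]
      rw [← integral_add (integrable_discountedHit hB hr0 hr1.le _ _) (integrable_avoidProb hB _ _)]
      have h1 (y : E) : discountedHit κ B r 0 y + avoidProb κ B 0 y = 1 := by
        by_cases hy : y ∈ B <;> simp [discountedHit, avoidProb, hy]
      simp [h1]
    | succ n ih =>
      have h1 : q n ≤ M / c * s n := by
        rw [div_mul_eq_mul_div, le_div_iff₀ hc]; linarith [hqs n]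
      have h2 : (1 - r) / (1 + M / c) * (s n + q n) ≤ (1 - r) * s n := by
        rw [div_mul_eq_mul_div, div_le_iff₀ (by linarith), mul_assoc]
        exact mul_le_mul_of_nonneg_left (by linarith) (by linarith)
      rw [hrec, pow_succ']
      calc r * s n + q n ≤ l * (s n + q n) := by rw [hl]; linarith
        _ ≤ l * l ^ n := mul_le_mul_of_nonneg_left ih hl0
  refine ⟨1 + M, max l (1 / 2), by linarith, by positivity, max_lt hl1 (by norm_num),
    fun g hg h0 h1 n => ?_⟩
  have habs (x) : |g x| ≤ 1 := by rw [abs_of_nonneg (h0 x)]; exact h1 x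
  have hgi : Integrable g ρ := integrable_of_measurable_of_abs_le hg habs
  have hb0 : 0 ≤ ∫ y, g y ∂ρ := integral_nonneg h0
  have hb1 : ∫ y, g y ∂ρ ≤ 1 := by
    simpa using integral_mono hgi (integrable_const (1 : ℝ)) h1
  have h2 : Integrable (fun y => M * discountedHit κ B r n y) ρ :=
    (integrable_discountedHit hB hr0 hr1.le _ n).const_mul _
  have h3 := integral_mono_ae ((integrable_integral_of_invariant (kernelIter_invariant hκ n)
    hgi).sub (integrable_const _)).abs ((integrable_avoidProb hB _ n).add h2)
    (ae_abs_kernelOp_sub_le hκ hB hr0 hr1.le (M := M) hg habs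
      (fun x => abs_le.2 ⟨by linarith [h0 x], by linarith [h1 x]⟩) (h g hg h0 h1) n)
  simp only [Pi.add_apply] at h3
  rw [integral_add (integrable_avoidProb hB _ n) h2, integral_const_mul] at h3
  calc _ ≤ q n + M * s n := h3
    _ ≤ (1 + M) * (s n + q n) := by nlinarith [hq0 n, hs0 n]
    _ ≤ (1 + M) * max l (1 / 2) ^ n := mul_le_mul_of_nonneg_left
      ((hdecay n).trans (pow_le_pow_left₀ hl0 (le_max_left _ _) n)) (by linarith)

end Mixing

theorem abs_integral_mul_le_sqrt {E : Type*} [MeasurableSpace E] {ρ : Measure E} {f g : E → ℝ}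
    (hf : MemLp f 2 ρ) (hg : MemLp g 2 ρ) :
    |∫ x, f x * g x ∂ρ| ≤ √(∫ x, f x ^ 2 ∂ρ) * √(∫ x, g x ^ 2 ∂ρ) := by
  have h := integral_mul_norm_le_Lp_mul_Lq (μ := ρ) (f := f) (g := g)
    Real.HolderConjugate.two_two (by simpa using hf) (by simpa using hg)
  simp only [← Real.sqrt_eq_rpow, Real.norm_eq_abs, Real.rpow_two, sq_abs] at h
  calc |∫ x, f x * g x ∂ρ| ≤ ∫ x, |f x * g x| ∂ρ := abs_integral_le_integral_abs
    _ = ∫ x, |f x| * |g x| ∂ρ := by simp_rw [abs_mul]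
    _ ≤ _ := h

section SquareIntegrable

variable {E : Type*} [MeasurableSpace E] {ρ : Measure E} [IsProbabilityMeasure ρ]

theorem sq_integral_le_integral_sq {ν : Measure E} [IsProbabilityMeasure ν] {g : E → ℝ}
    (hg : MemLp g 2 ν) : (∫ x, g x ∂ν) ^ 2 ≤ ∫ x, g x ^ 2 ∂ν := by
  have h := variance_nonneg g ν
  rw [variance_eq_sub hg] at h
  simpa using h

theorem memLp_two_integral_kernel {η : Kernel E E} [IsMarkovKernel η] (hη : Kernel.Invariant η ρ)
    {g : E → ℝ} (hgm : Measurable g) (hg : MemLp g 2 ρ) :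
    MemLp (fun x => ∫ y, g y ∂η x) 2 ρ ∧ ∫ x, (∫ y, g y ∂η x) ^ 2 ∂ρ ≤ ∫ x, g x ^ 2 ∂ρ := by
  have hsq := hg.integrable_sq
  have hm := measurable_integral_kernel η hgm
  have hle : ∀ᵐ x ∂ρ, (∫ y, g y ∂η x) ^ 2 ≤ ∫ y, g y ^ 2 ∂η x := by
    filter_upwards [ae_integrable_of_invariant hη hsq] with x hx
    exact sq_integral_le_integral_sq ((memLp_two_iff_integrable_sq hgm.aestronglyMeasurable).2 hx)
  have hint := integrable_integral_of_invariant hη hsq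
  have hint' : Integrable (fun x => (∫ y, g y ∂η x) ^ 2) ρ := by
    refine hint.mono (hm.pow_const 2).aestronglyMeasurable ?_
    filter_upwards [hle] with x hx
    rw [Real.norm_of_nonneg (sq_nonneg _)]
    exact hx.trans (le_abs_self _)
  refine ⟨(memLp_two_iff_integrable_sq hm.aestronglyMeasurable).2 hint', ?_⟩
  rw [← integral_integral_of_invariant hη hsq]
  exact integral_mono_ae hint' hint hle

theorem memLp_two_of_integrable_rpow {f : E → ℝ} (hf : Measurable f) {ε : ℝ} (hε : 0 < ε)
    (hmom : Integrable (fun x => |f x| ^ (2 + ε)) ρ) : MemLp f 2 ρ := by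
  rw [memLp_two_iff_integrable_sq hf.aestronglyMeasurable]
  refine (hmom.add (integrable_const 1)).mono (hf.pow_const 2).aestronglyMeasurable
    (ae_of_all _ fun x => ?_)
  simp only [Pi.add_apply]
  have h0 : (0 : ℝ) ≤ |f x| ^ (2 + ε) := by positivity
  rw [Real.norm_of_nonneg (sq_nonneg _), Real.norm_of_nonneg (by positivity), ← sq_abs]
  by_cases h : 1 ≤ |f x|
  · have : |f x| ^ (2 : ℕ) ≤ |f x| ^ (2 + ε) := by
      rw [← Real.rpow_natCast]
      exact Real.rpow_le_rpow_of_exponent_le h (by norm_num; linarith)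
    linarith
  · have := pow_le_one₀ (n := 2) (abs_nonneg (f x)) (not_le.1 h).le
    linarith

theorem exists_integral_abs_kernelOp_sub_le_mul {κ : Kernel E E} [IsMarkovKernel κ]
    (hκ : Kernel.Invariant κ ρ) (hgeo : GeometricallyErgodic κ ρ) :
    ∃ K l : ℝ, 0 ≤ K ∧ 0 < l ∧ l < 1 ∧ ∀ g : E → ℝ, Measurable g → ∀ N : ℝ, 0 < N →
      (∀ x, |g x| ≤ N) → ∀ n, ∫ x, |kernelOp κ n g x - ∫ y, g y ∂ρ| ∂ρ ≤ N * (K * l ^ n) := by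
  obtain ⟨K, l, hK, hl0, hl1, h⟩ := exists_integral_abs_kernelOp_sub_le hκ hgeo
  refine ⟨2 * K, l, by positivity, hl0, hl1, fun g hg N hN hgN n => ?_⟩
  have h1 := h (fun x => (g x + N) / (2 * N)) (by fun_prop)
    (fun x => div_nonneg (by linarith [abs_le.1 (hgN x)]) (by positivity))
    (fun x => by rw [div_le_one (by positivity)]; linarith [abs_le.1 (hgN x)]) n
  have key (ν : Measure E) [IsProbabilityMeasure ν] :
      ∫ x, (g x + N) / (2 * N) ∂ν = (∫ x, g x ∂ν) / (2 * N) + 1 / 2 := by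
    rw [integral_div, integral_add (integrable_of_measurable_of_abs_le hg hgN)
      (integrable_const _)]
    simp only [integral_const, probReal_univ, smul_eq_mul, one_mul]
    field_simp
  have h2 (x : E) : |kernelOp κ n (fun x => (g x + N) / (2 * N)) x -
      ∫ y, (g y + N) / (2 * N) ∂ρ| = |kernelOp κ n g x - ∫ y, g y ∂ρ| / (2 * N) := by
    simp only [kernelOp]
    rw [key, key, add_sub_add_right_eq_sub, ← sub_div, abs_div, abs_of_pos (by positivity : 0 < 2 * N)]
  simp only [h2] at h1
  rw [integral_div, div_le_iff₀ (by positivity)] at h1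
  linarith

theorem exists_integral_sq_kernelOp_sub_le {κ : Kernel E E} [IsMarkovKernel κ]
    (hκ : Kernel.Invariant κ ρ) (hgeo : GeometricallyErgodic κ ρ) {f : E → ℝ} (hf : Measurable f)
    {ε : ℝ} (hε : 0 < ε) (hmom : Integrable (fun x => |f x| ^ (2 + ε)) ρ) :
    ∃ A b : ℝ, 0 ≤ A ∧ 0 < b ∧ b < 1 ∧
      ∀ n, ∫ x, (kernelOp κ n f x - ∫ y, f y ∂ρ) ^ 2 ∂ρ ≤ A * b ^ n := by
  obtain ⟨K, l, hK, hl0, hl1, h⟩ := exists_integral_abs_kernelOp_sub_le_mul hκ hgeo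
  set B := ∫ x, |f x| ^ (2 + ε) ∂ρ with hB
  have hB0 : 0 ≤ B := integral_nonneg fun x => by positivity
  obtain ⟨p, hp0, hp1, hpl⟩ : ∃ p : ℝ, 0 < p ∧ p < 1 ∧ p ^ 4 = l := by
    refine ⟨√(√l), by positivity, ?_, ?_⟩
    · rw [Real.sqrt_lt' one_pos, one_pow, Real.sqrt_lt' one_pos]; simpa
    · rw [show 4 = 2 * 2 from rfl, pow_mul, Real.sq_sqrt (by positivity), Real.sq_sqrt hl0.le]
  have hpε0 : 0 < p ^ ε := by positivity
  have hpε1 : p ^ ε < 1 := Real.rpow_lt_one hp0.le hp1 hε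
  refine ⟨4 * K + 8 * B, max (p ^ 2) (p ^ ε), by positivity, by positivity,
    max_lt (by nlinarith) hpε1, fun n => ?_⟩
  set N : ℝ := (p⁻¹) ^ n with hN
  have hN0 : 0 < N := by positivity
  set S : Set E := {x | |f x| ≤ N}
  have hS : MeasurableSet S := measurableSet_le hf.abs measurable_const
  set fb := S.indicator f
  set ft := Sᶜ.indicator f
  have hsum : f = fun x => fb x + ft x := by
    funext x
    exact congrFun (Set.indicator_self_add_compl S f).symm x
  have hfb : Measurable fb := hf.indicator hS
  have hft : Measurable ft := hf.indicator hS.compl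
  have hfbN (x : E) : |fb x| ≤ N := by
    by_cases hx : x ∈ S
    · simp only [fb, Set.indicator_of_mem hx]
      exact hx
    · simpa [fb, hx] using hN0.le
  have hf2 := memLp_two_of_integrable_rpow hf hε hmom
  have hfb2 : MemLp fb 2 ρ := hf2.indicator hS
  have hft2 : MemLp ft 2 ρ := hf2.indicator hS.compl
  have hκn := kernelIter_invariant hκ n
  have htail : ∫ x, ft x ^ 2 ∂ρ ≤ (p ^ ε) ^ n * B := by
    rw [hB, ← integral_const_mul]
    refine integral_mono hft2.integrable_sq (hmom.const_mul _) fun x => ?_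
    by_cases hx : x ∈ S
    · simp only [ft, Set.indicator_of_notMem (Set.notMem_compl_iff.2 hx)]
      rw [zero_pow two_ne_zero]
      positivity
    · simp only [ft, Set.indicator_of_mem (Set.mem_compl hx)]
      have hx' : N < |f x| := not_le.1 hx
      have h1 : 1 ≤ (p ^ ε) ^ n * |f x| ^ ε := by
        have h2 : (p ^ ε) ^ n = (p ^ n) ^ ε := by
          rw [← Real.rpow_mul_natCast hp0.le, mul_comm, Real.rpow_natCast_mul hp0.le]
        rw [h2, ← Real.mul_rpow (by positivity) (abs_nonneg _)]
        refine Real.one_le_rpow ?_ hε.le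
        have h3 : p ^ n * N = 1 := by rw [hN, ← mul_pow, mul_inv_cancel₀ hp0.ne', one_pow]
        rw [← h3]
        gcongr
      calc f x ^ 2 = |f x| ^ 2 * 1 := by rw [sq_abs, mul_one]
        _ ≤ |f x| ^ 2 * ((p ^ ε) ^ n * |f x| ^ ε) := by gcongr
        _ = (p ^ ε) ^ n * |f x| ^ (2 + ε) := by
          rw [Real.rpow_add (hN0.trans hx'), Real.rpow_two]; ring
  have hTb := memLp_two_integral_kernel hκn hfb hfb2
  have hTt := memLp_two_integral_kernel hκn hft hft2
  have hDb2 : MemLp (fun x => kernelOp κ n fb x - ∫ y, fb y ∂ρ) 2 ρ := hTb.1.sub (memLp_const _)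
  have hDt2 : MemLp (fun x => kernelOp κ n ft x - ∫ y, ft y ∂ρ) 2 ρ := hTt.1.sub (memLp_const _)
  have hfbi := hfb2.integrable one_le_two
  have hfti := hft2.integrable one_le_two
  have hb : ∫ x, (kernelOp κ n fb x - ∫ y, fb y ∂ρ) ^ 2 ∂ρ ≤ 2 * K * (p ^ 2) ^ n := by
    have hle (x : E) : (kernelOp κ n fb x - ∫ y, fb y ∂ρ) ^ 2 ≤
        2 * N * |kernelOp κ n fb x - ∫ y, fb y ∂ρ| := by
      have h1 : |kernelOp κ n fb x| ≤ N := abs_integral_kernel_le _ hfbN x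
      have h2 : |∫ y, fb y ∂ρ| ≤ N := by
        simpa using norm_integral_le_of_norm_le_const (μ := ρ) (f := fb) (ae_of_all _ hfbN)
      have h3 := (abs_sub _ _).trans (add_le_add h1 h2)
      rw [← sq_abs, sq]
      exact mul_le_mul_of_nonneg_right (by linarith) (abs_nonneg _)
    calc _ ≤ ∫ x, 2 * N * |kernelOp κ n fb x - ∫ y, fb y ∂ρ| ∂ρ :=
          integral_mono hDb2.integrable_sq ((hDb2.integrable one_le_two).abs.const_mul _) hle
      _ = 2 * N * ∫ x, |kernelOp κ n fb x - ∫ y, fb y ∂ρ| ∂ρ := integral_const_mul _ _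
      _ ≤ 2 * N * (N * (K * l ^ n)) := by gcongr; exact h fb hfb N hN0 hfbN n
      _ = 2 * K * (p ^ 2) ^ n := by
        rw [← hpl, hN]
        have : p⁻¹ ^ n * p ^ n = 1 := by rw [← mul_pow, inv_mul_cancel₀ hp0.ne', one_pow]
        calc _ = 2 * K * (p⁻¹ ^ n * p ^ n) ^ 2 * (p ^ 2) ^ n := by ring
          _ = _ := by rw [this]; ring
  have ht : ∫ x, (kernelOp κ n ft x - ∫ y, ft y ∂ρ) ^ 2 ∂ρ ≤ 4 * B * (p ^ ε) ^ n := by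
    have h1 : ∫ x, (kernelOp κ n ft x - ∫ y, ft y ∂ρ) ^ 2 ∂ρ ≤
        ∫ x, 2 * kernelOp κ n ft x ^ 2 + 2 * (∫ y, ft y ∂ρ) ^ 2 ∂ρ :=
      integral_mono hDt2.integrable_sq ((hTt.1.integrable_sq.const_mul 2).add (integrable_const _))
        fun x => by dsimp only; nlinarith [sq_nonneg (kernelOp κ n ft x + ∫ y, ft y ∂ρ)]
    have hTt2 : Integrable (fun x => kernelOp κ n ft x ^ 2) ρ := hTt.1.integrable_sq
    rw [integral_add (hTt2.const_mul 2) (integrable_const _), integral_const_mul] at h1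
    simp only [integral_const, probReal_univ, smul_eq_mul, one_mul] at h1
    have h2 := sq_integral_le_integral_sq hft2
    have h3 : ∫ x, kernelOp κ n ft x ^ 2 ∂ρ ≤ _ := hTt.2
    linarith
  have hae : ∀ᵐ x ∂ρ, (kernelOp κ n f x - ∫ y, f y ∂ρ) ^ 2 ≤
      2 * (kernelOp κ n fb x - ∫ y, fb y ∂ρ) ^ 2 + 2 * (kernelOp κ n ft x - ∫ y, ft y ∂ρ) ^ 2 := by
    filter_upwards [ae_integrable_of_invariant hκn hfbi, ae_integrable_of_invariant hκn hfti]
      with x h1 h2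
    have e1 : kernelOp κ n f x = kernelOp κ n fb x + kernelOp κ n ft x := by
      simp only [kernelOp]; rw [← integral_add h1 h2, ← hsum]
    have e2 : ∫ y, f y ∂ρ = ∫ y, fb y ∂ρ + ∫ y, ft y ∂ρ := by
      rw [← integral_add hfbi hfti, ← hsum]
    rw [e1, e2]
    nlinarith [sq_nonneg ((kernelOp κ n fb x - ∫ y, fb y ∂ρ) - (kernelOp κ n ft x - ∫ y, ft y ∂ρ))]
  have hD2 : MemLp (fun x => kernelOp κ n f x - ∫ y, f y ∂ρ) 2 ρ :=
    (memLp_two_integral_kernel hκn hf hf2).1.sub (memLp_const _)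
  have hfin := integral_mono_ae hD2.integrable_sq
    ((hDb2.integrable_sq.const_mul 2).add (hDt2.integrable_sq.const_mul 2)) hae
  simp only [Pi.add_apply] at hfin
  rw [integral_add (hDb2.integrable_sq.const_mul 2) (hDt2.integrable_sq.const_mul 2),
    integral_const_mul, integral_const_mul] at hfin
  have m1 : (p ^ 2) ^ n ≤ max (p ^ 2) (p ^ ε) ^ n :=
    pow_le_pow_left₀ (by positivity) (le_max_left _ _) n
  have m2 : (p ^ ε) ^ n ≤ max (p ^ 2) (p ^ ε) ^ n :=
    pow_le_pow_left₀ (by positivity) (le_max_right _ _) n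
  nlinarith [mul_le_mul_of_nonneg_left m1 hK, mul_le_mul_of_nonneg_left m2 hB0]

end SquareIntegrable

section Poisson

variable {E : Type*} [MeasurableSpace E] {ρ : Measure E} [IsProbabilityMeasure ρ]

theorem memLp_two_integral_kernel_coeFn {η : Kernel E E} [IsMarkovKernel η]
    (hη : Kernel.Invariant η ρ) (g : Lp ℝ 2 ρ) :
    MemLp (fun x => ∫ y, g y ∂η x) 2 ρ :=
  (memLp_two_integral_kernel hη (Lp.stronglyMeasurable g).measurable (Lp.memLp g)).1

theorem norm_sq_eq_integral_sq {ν : Measure E} (g : Lp ℝ 2 ν) : ‖g‖ ^ 2 = ∫ x, g x ^ 2 ∂ν := by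
  rw [← real_inner_self_eq_norm_sq, L2.inner_def]
  simp [sq]

/-- The contraction of `L²(ρ)` induced by a Markov kernel preserving `ρ`. -/
noncomputable def kernelLp (η : Kernel E E) [IsMarkovKernel η] (hη : Kernel.Invariant η ρ) :
    Lp ℝ 2 ρ →L[ℝ] Lp ℝ 2 ρ :=
  LinearMap.mkContinuous
    { toFun := fun g => (memLp_two_integral_kernel_coeFn hη g).toLp _
      map_add' := fun g k => by
        rw [← MemLp.toLp_add]
        refine MemLp.toLp_congr _ _ ?_
        filter_upwards [ae_ae_of_invariant hη (Lp.coeFn_add g k),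
          ae_integrable_of_invariant hη ((Lp.memLp g).integrable one_le_two),
          ae_integrable_of_invariant hη ((Lp.memLp k).integrable one_le_two)] with x h1 h2 h3
        rw [integral_congr_ae h1]
        exact integral_add h2 h3
      map_smul' := fun c g => by
        rw [← MemLp.toLp_const_smul]
        refine MemLp.toLp_congr _ _ ?_
        filter_upwards [ae_ae_of_invariant hη (Lp.coeFn_smul c g)] with x h1
        rw [integral_congr_ae h1]
        exact integral_smul c _ } 1 fun g => by
    refine (sq_le_sq₀ (norm_nonneg _) (by positivity)).1 ?_
    simp only [LinearMap.coe_mk, AddHom.coe_mk, one_mul]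
    rw [norm_sq_eq_integral_sq, norm_sq_eq_integral_sq,
      integral_congr_ae ((MemLp.coeFn_toLp (memLp_two_integral_kernel_coeFn hη g)).fun_pow_const 2)]
    exact (memLp_two_integral_kernel hη (Lp.stronglyMeasurable g).measurable (Lp.memLp g)).2

theorem coeFn_kernelLp {η : Kernel E E} [IsMarkovKernel η] (hη : Kernel.Invariant η ρ)
    (g : Lp ℝ 2 ρ) : kernelLp η hη g =ᵐ[ρ] fun x => ∫ y, g y ∂η x :=
  MemLp.coeFn_toLp (memLp_two_integral_kernel_coeFn hη g)

theorem kernelOp_succ_ae {κ : Kernel E E} [IsMarkovKernel κ] {ν : Measure E}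
    (hκ : Kernel.Invariant κ ν) (n : ℕ) {g : E → ℝ} (hg : Integrable g ν) :
    kernelOp κ (n + 1) g =ᵐ[ν] fun x => ∫ y, kernelOp κ n g y ∂κ x := by
  filter_upwards [ae_integrable_of_invariant (kernelIter_invariant hκ (n + 1)) hg] with x hx
  rw [kernelIter_succ_eq_comp] at hx
  simp only [kernelOp, kernelIter_succ_eq_comp]
  rw [Kernel.integral_comp hx]

theorem kernelLp_pow_toLp {κ : Kernel E E} [IsMarkovKernel κ] (hκ : Kernel.Invariant κ ρ)
    {f : E → ℝ} (hfm : Measurable f) (hf : MemLp f 2 ρ) (n : ℕ) :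
    (kernelLp κ hκ ^ n) (hf.toLp f) =ᵐ[ρ] kernelOp κ n f := by
  induction n with
  | zero => simpa [kernelOp_zero κ hfm] using hf.coeFn_toLp
  | succ n ih =>
    rw [pow_succ', mul_apply_eq_comp]
    filter_upwards [coeFn_kernelLp hκ ((kernelLp κ hκ ^ n) (hf.toLp f)), ae_ae_of_invariant hκ ih,
      kernelOp_succ_ae hκ n (hf.integrable one_le_two)] with x h1 h2 h3
    rw [h1, h3]
    exact integral_congr_ae h2

theorem abs_kernelCov_le {κ : Kernel E E} [IsMarkovKernel κ] (hκ : Kernel.Invariant κ ρ)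
    {f g : E → ℝ} (hf : MemLp f 2 ρ) (hgm : Measurable g) (hg : MemLp g 2 ρ) (n : ℕ) :
    |kernelCov κ ρ f g n| ≤
      √(∫ x, f x ^ 2 ∂ρ) * √(∫ x, (kernelOp κ n g x - ∫ y, g y ∂ρ) ^ 2 ∂ρ) := by
  have h1 : MemLp (kernelOp κ n g) 2 ρ :=
    (memLp_two_integral_kernel (kernelIter_invariant hκ n) hgm hg).1
  have h2 : MemLp (fun x => kernelOp κ n g x - ∫ y, g y ∂ρ) 2 ρ := h1.sub (memLp_const _)
  have h3 : kernelCov κ ρ f g n = ∫ x, f x * (kernelOp κ n g x - ∫ y, g y ∂ρ) ∂ρ := by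
    simp_rw [mul_sub]
    rw [integral_sub (show Integrable (fun x => f x * kernelOp κ n g x) ρ from hf.integrable_mul h1) ((hf.integrable one_le_two).mul_const _),
      integral_mul_const, kernelCov]
  rw [h3]
  exact abs_integral_mul_le_sqrt hf h2

theorem summable_sqrt_of_le_geometric {u : ℕ → ℝ} {A b : ℝ} (hA : 0 ≤ A) (hb0 : 0 < b)
    (hb1 : b < 1) (h : ∀ n, u n ≤ A * b ^ n) : Summable fun n => √(u n) := by
  have hb : √b < 1 := by rwa [Real.sqrt_lt' one_pos, one_pow]
  refine Summable.of_nonneg_of_le (fun n => Real.sqrt_nonneg _) (fun n => ?_)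
    ((summable_geometric_of_lt_one (Real.sqrt_nonneg b) hb).mul_left √A)
  calc √(u n) ≤ √(A * b ^ n) := Real.sqrt_le_sqrt (h n)
    _ = √A * √b ^ n := by rw [Real.sqrt_mul hA, Real.sqrt_eq_rpow (b ^ n), Real.sqrt_eq_rpow b,
        ← Real.rpow_natCast_mul hb0.le, ← Real.rpow_mul_natCast hb0.le, mul_comm (n : ℝ)]

theorem summable_sqrt_integral_sq_kernelOp_sub {κ : Kernel E E} [IsMarkovKernel κ]
    (hκ : Kernel.Invariant κ ρ) (hgeo : GeometricallyErgodic κ ρ) {f : E → ℝ} (hf : Measurable f)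
    {ε : ℝ} (hε : 0 < ε) (hmom : Integrable (fun x => |f x| ^ (2 + ε)) ρ) :
    Summable fun n => √(∫ x, (kernelOp κ n f x - ∫ y, f y ∂ρ) ^ 2 ∂ρ) := by
  obtain ⟨A, b, hA, hb0, hb1, h⟩ := exists_integral_sq_kernelOp_sub_le hκ hgeo hf hε hmom
  exact summable_sqrt_of_le_geometric hA hb0 hb1 h

theorem summable_kernelCov {κ : Kernel E E} [IsMarkovKernel κ]
    (hκ : Kernel.Invariant κ ρ) (hgeo : GeometricallyErgodic κ ρ) {f g : E → ℝ}
    (hf : MemLp f 2 ρ) (hg : Measurable g)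
    {ε : ℝ} (hε : 0 < ε) (hmom : Integrable (fun x => |g x| ^ (2 + ε)) ρ) :
    Summable (kernelCov κ ρ f g) := by
  refine Summable.of_norm_bounded
    ((summable_sqrt_integral_sq_kernelOp_sub hκ hgeo hg hε hmom).mul_left √(∫ x, f x ^ 2 ∂ρ))
    fun n => ?_
  exact abs_kernelCov_le hκ hf hg (memLp_two_of_integrable_rpow hg hε hmom) n

theorem summable_natAbs {c : ℕ → ℝ} (hc : Summable c) : Summable fun j : ℤ => c j.natAbs := by
  refine Summable.of_nat_of_neg ?_ ?_ <;> simpa using hc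

theorem tsum_natAbs {c : ℕ → ℝ} (hc : Summable c) :
    ∑' j : ℤ, c j.natAbs = 2 * ∑' n, c n - c 0 := by
  have h1 : HasSum (fun n : ℕ => c (n : ℤ).natAbs) (∑' n, c n) := by simpa using hc.hasSum
  have h2 : HasSum (fun n : ℕ => c (-(n : ℤ)).natAbs) (∑' n, c n) := by simpa using hc.hasSum
  rw [(HasSum.of_nat_of_neg (f := fun j : ℤ => c j.natAbs) h1 h2).tsum_eq]
  simp only [Int.natAbs_zero]
  ring

theorem exists_poisson_solution {κ : Kernel E E} [IsMarkovKernel κ]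
    (hκ : Kernel.Invariant κ ρ) (hgeo : GeometricallyErgodic κ ρ) {f : E → ℝ} (hf : Measurable f)
    {ε : ℝ} (hε : 0 < ε) (hmom : Integrable (fun x => |f x| ^ (2 + ε)) ρ) (hf0 : ∫ x, f x ∂ρ = 0) :
    ∃ F : E → ℝ, Measurable F ∧ MemLp F 2 ρ ∧ (∀ᵐ x ∂ρ, f x = F x - ∫ y, F y ∂κ x) ∧
      ∫ x, F x ^ 2 ∂ρ - ∫ x, (∫ y, F y ∂κ x) ^ 2 ∂ρ = ∑' j : ℤ, kernelCov κ ρ f f j.natAbs := by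
  have hf2 := memLp_two_of_integrable_rpow hf hε hmom
  set T := kernelLp κ hκ
  set φ : Lp ℝ 2 ρ := hf2.toLp f
  have hTn (n : ℕ) : (T ^ n) φ =ᵐ[ρ] kernelOp κ n f := kernelLp_pow_toLp hκ hf hf2 n
  have hnorm (n : ℕ) : ‖(T ^ n) φ‖ = √(∫ x, (kernelOp κ n f x - ∫ y, f y ∂ρ) ^ 2 ∂ρ) := by
    rw [← Real.sqrt_sq (norm_nonneg _), norm_sq_eq_integral_sq, hf0]
    congr 1
    refine integral_congr_ae ?_
    filter_upwards [hTn n] with x hx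
    rw [hx, sub_zero]
  have hsum : Summable fun n => (T ^ n) φ := by
    refine Summable.of_norm ?_
    simp_rw [hnorm]
    exact summable_sqrt_integral_sq_kernelOp_sub hκ hgeo hf hε hmom
  set Φ : Lp ℝ 2 ρ := ∑' n, (T ^ n) φ
  have hΦ : φ + T Φ = Φ := by
    have h1 : T Φ = ∑' n, (T ^ (n + 1)) φ := by
      rw [T.map_tsum hsum]
      simp_rw [pow_succ', mul_apply_eq_comp]
    rw [h1]
    conv_rhs => rw [show Φ = ∑' n, (T ^ n) φ from rfl, hsum.tsum_eq_zero_add]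
    simp
  have hTΦ : T Φ =ᵐ[ρ] fun x => ∫ y, Φ y ∂κ x := coeFn_kernelLp hκ Φ
  refine ⟨Φ, (Lp.stronglyMeasurable Φ).measurable, Lp.memLp Φ, ?_, ?_⟩
  · have h2 := Lp.coeFn_add φ (T Φ)
    rw [hΦ] at h2
    filter_upwards [h2, hTΦ, hf2.coeFn_toLp] with x h3 h4 h5
    rw [← h4, h3, Pi.add_apply, ← h5]
    ring
  · have hcov (n : ℕ) : kernelCov κ ρ f f n = inner ℝ φ ((T ^ n) φ) := by
      rw [kernelCov, hf0, L2.inner_def, zero_mul, sub_zero]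
      refine integral_congr_ae ?_
      filter_upwards [hTn n, hf2.coeFn_toLp] with x h1 h2
      simp only [h1, h2, φ, RCLike.inner_apply, conj_trivial]
      ring
    have h3 : ∑' n, kernelCov κ ρ f f n = inner ℝ φ Φ := by
      simp_rw [hcov]
      exact ((innerSL ℝ φ).map_tsum hsum).symm
    rw [tsum_natAbs (summable_kernelCov hκ hgeo hf2 hf hε hmom), h3, hcov 0,
      ← norm_sq_eq_integral_sq,
      integral_congr_ae (g := fun x => (T Φ) x ^ 2) (hTΦ.symm.fun_pow_const 2),
      ← norm_sq_eq_integral_sq, ← real_inner_self_eq_norm_sq, ← real_inner_self_eq_norm_sq]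
    have h4 : T Φ = Φ - φ := eq_sub_of_add_eq' hΦ
    rw [h4]
    simp only [inner_sub_left, inner_sub_right, pow_zero, one_apply_eq_self,
      real_inner_comm]
    ring

end Poisson

section Chain

variable {Ω E : Type*} [MeasurableSpace E]

/-- The σ-algebra generated by `X 0, …, X n`. -/
abbrev pastSigma (X : ℕ → Ω → E) (n : ℕ) : MeasurableSpace Ω :=
  MeasurableSpace.comap (fun ω (i : Fin (n + 1)) => X i ω) MeasurableSpace.pi

theorem measurable_pastSigma (X : ℕ → Ω → E) {k n : ℕ} (hk : k ≤ n) :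
    Measurable[pastSigma X n] (X k) := by
  have h1 : Measurable[pastSigma X n] fun ω (i : Fin (n + 1)) => X i ω := comap_measurable _
  exact (measurable_pi_apply (⟨k, Nat.lt_succ_of_le hk⟩ : Fin (n + 1))).comp h1

theorem pastSigma_mono (X : ℕ → Ω → E) {m n : ℕ} (hmn : m ≤ n) : pastSigma X m ≤ pastSigma X n := by
  rw [pastSigma, ← measurable_iff_comap_le]
  exact @measurable_pi_lambda _ _ _ (pastSigma X n) _ _ fun i =>
    measurable_pastSigma X ((Nat.lt_succ_iff.1 i.2).trans hmn)

variable [MeasurableSpace Ω]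

theorem pastSigma_le {X : ℕ → Ω → E} (hX : ∀ n, Measurable (X n)) (n : ℕ) :
    pastSigma X n ≤ (inferInstance : MeasurableSpace Ω) := by
  rw [pastSigma, ← measurable_iff_comap_le]
  exact measurable_pi_lambda _ fun i => hX i

variable {P : Measure Ω} [IsProbabilityMeasure P] {X : ℕ → Ω → E} {κ : Kernel E E}
  [IsMarkovKernel κ]

theorem map_past_next (hchain : IsMarkovChain P X κ) (n : ℕ) :
    P.map (fun ω => ((fun i : Fin (n + 1) => X i ω), X (n + 1) ω)) =
      (P.map fun ω (i : Fin (n + 1)) => X i ω) ⊗ₘ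
        κ.comap (fun h : Fin (n + 1) → E => h (Fin.last n)) (measurable_pi_apply _) := by
  have hX := hchain.1
  have hH : Measurable fun ω (i : Fin (n + 1)) => X i ω := measurable_pi_lambda _ fun i => hX i
  have : IsProbabilityMeasure (P.map fun ω (i : Fin (n + 1)) => X i ω) :=
    Measure.isProbabilityMeasure_map hH.aemeasurable
  have : IsProbabilityMeasure (P.map (fun ω => ((fun i : Fin (n + 1) => X i ω), X (n + 1) ω))) :=
    Measure.isProbabilityMeasure_map (hH.prodMk (hX _)).aemeasurable
  refine Measure.ext_prod fun {A B} hA hB => ?_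
  rw [Measure.map_apply (hH.prodMk (hX _)) (hA.prod hB), Measure.compProd_apply_prod hA hB,
    setLIntegral_map hA (Kernel.measurable_coe _ hB) hH]
  have hc := hchain.2 n B hB
  have hle : MeasurableSpace.comap (fun ω (i : Fin (n + 1)) => X i ω) MeasurableSpace.pi ≤
      (inferInstance : MeasurableSpace Ω) := pastSigma_le hX n
  have hint : Integrable (fun ω => Set.indicator B (fun _ => (1 : ℝ)) (X (n + 1) ω)) P :=
    Integrable.of_bound ((measurable_const.indicator hB).comp (hX _)).aestronglyMeasurable 1
      (ae_of_all _ fun ω => by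
        by_cases h : X (n + 1) ω ∈ B <;> simp [h])
  have h1 := setIntegral_condExp hle hint (s := (fun ω (i : Fin (n + 1)) => X i ω) ⁻¹' A) ⟨A, hA, rfl⟩
  rw [setIntegral_congr_ae (g := fun ω => (κ (X n ω) B).toReal) (hH hA)
    (hc.mono fun ω h _ => h)] at h1
  have h2 : ∫ ω in (fun ω (i : Fin (n + 1)) => X i ω) ⁻¹' A,
      Set.indicator B (fun _ => (1 : ℝ)) (X (n + 1) ω) ∂P =
      P.real ((fun ω => ((fun i : Fin (n + 1) => X i ω), X (n + 1) ω)) ⁻¹' A ×ˢ B) := by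
    have : (fun ω => Set.indicator B (fun _ => (1 : ℝ)) (X (n + 1) ω)) =
        (X (n + 1) ⁻¹' B).indicator 1 := by
      funext ω
      by_cases h : X (n + 1) ω ∈ B <;> simp [h]
    rw [this, integral_indicator_one (hX _ hB), measureReal_restrict_apply (hX _ hB)]
    congr 1
    ext ω
    simp [and_comm]
  rw [h2, integral_toReal] at h1
  · have h3 := (ENNReal.toReal_eq_toReal_iff' ?_ (measure_ne_top _ _)).1 h1
    · exact h3.symm
    · refine ((lintegral_mono fun ω => (prob_le_one : κ (X n ω) B ≤ 1)).trans_lt ?_).ne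
      simp
  · exact ((Kernel.measurable_coe κ hB).comp (hX n)).aemeasurable
  · exact ae_of_all _ fun ω => measure_lt_top _ _

theorem map_pair {ρ : Measure E} (hchain : IsMarkovChain P X κ) (hstat : ∀ n, P.map (X n) = ρ)
    (n : ℕ) : P.map (fun ω => (X n ω, X (n + 1) ω)) = ρ ⊗ₘ κ := by
  have hX := hchain.1
  have hH : Measurable fun ω (i : Fin (n + 1)) => X i ω := measurable_pi_lambda _ fun i => hX i
  have : IsProbabilityMeasure (P.map fun ω (i : Fin (n + 1)) => X i ω) :=
    Measure.isProbabilityMeasure_map hH.aemeasurable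
  have : IsProbabilityMeasure (P.map fun ω => (X n ω, X (n + 1) ω)) :=
    Measure.isProbabilityMeasure_map ((hX _).prodMk (hX _)).aemeasurable
  rw [← hstat n]
  have : IsProbabilityMeasure (P.map (X n)) :=
    Measure.isProbabilityMeasure_map (hX n).aemeasurable
  refine Measure.ext_prod fun {A B} hA hB => ?_
  have hA' : MeasurableSet ((fun h : Fin (n + 1) → E => h (Fin.last n)) ⁻¹' A) :=
    measurable_pi_apply _ hA
  have h := congrArg (fun ν => ν (((fun h : Fin (n + 1) → E => h (Fin.last n)) ⁻¹' A) ×ˢ B))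
    (map_past_next hchain n)
  rw [Measure.map_apply (hH.prodMk (hX _)) (hA'.prod hB), Measure.compProd_apply_prod hA' hB,
    setLIntegral_map hA' (Kernel.measurable_coe _ hB) hH] at h
  rw [Measure.map_apply ((hX _).prodMk (hX _)) (hA.prod hB), Measure.compProd_apply_prod hA hB,
    setLIntegral_map hA (Kernel.measurable_coe _ hB) (hX n)]
  exact h

theorem integral_mul_transition {ρ : Measure E} (hchain : IsMarkovChain P X κ)
    (hstat : ∀ n, P.map (X n) = ρ) {n : ℕ} {Z : Ω → ℂ} (hZ : Measurable[pastSigma X n] Z)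
    (hZ1 : ∀ ω, ‖Z ω‖ ≤ 1) {Φ : E × E → ℝ} (hΦm : Measurable Φ) (hΦ : Integrable Φ (ρ ⊗ₘ κ)) :
    ∫ ω, Z ω * (Φ (X n ω, X (n + 1) ω) : ℝ) ∂P =
      ∫ ω, Z ω * ((∫ y, Φ (X n ω, y) ∂κ (X n ω) : ℝ) : ℂ) ∂P := by
  have hX := hchain.1
  have hH : Measurable fun ω (i : Fin (n + 1)) => X i ω := measurable_pi_lambda _ fun i => hX i
  have : IsProbabilityMeasure (P.map fun ω (i : Fin (n + 1)) => X i ω) :=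
    Measure.isProbabilityMeasure_map hH.aemeasurable
  obtain ⟨z, hz, rfl⟩ := hZ.exists_eq_measurable_comp
  have hΨ : Measurable fun p : (Fin (n + 1) → E) × E => z p.1 * (Φ (p.1 (Fin.last n), p.2) : ℂ) := by
    fun_prop
  have e1 : ∫ ω, (z ∘ fun ω (i : Fin (n + 1)) => X i ω) ω * (Φ (X n ω, X (n + 1) ω) : ℝ) ∂P =
      ∫ p, z p.1 * (Φ (p.1 (Fin.last n), p.2) : ℂ)
        ∂(P.map (fun ω => ((fun i : Fin (n + 1) => X i ω), X (n + 1) ω))) := by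
    rw [integral_map (hH.prodMk (hX _)).aemeasurable hΨ.aestronglyMeasurable]
    rfl
  have hint : Integrable (fun p : (Fin (n + 1) → E) × E => z p.1 * (Φ (p.1 (Fin.last n), p.2) : ℂ))
      (P.map (fun ω => ((fun i : Fin (n + 1) => X i ω), X (n + 1) ω))) := by
    rw [integrable_map_measure hΨ.aestronglyMeasurable (hH.prodMk (hX _)).aemeasurable]
    rw [← map_pair hchain hstat n, integrable_map_measure hΦm.aestronglyMeasurable
      ((hX _).prodMk (hX _)).aemeasurable] at hΦ
    exact hΦ.ofReal.bdd_mul (c := 1) (hz.comp hH).aestronglyMeasurable (ae_of_all _ hZ1)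
  rw [e1]
  rw [map_past_next hchain n] at hint ⊢
  rw [Measure.integral_compProd hint, integral_map hH.aemeasurable]
  · refine integral_congr_ae (ae_of_all _ fun ω => ?_)
    simp only [Kernel.comap_apply, integral_const_mul, integral_complex_ofReal]
    rfl
  · exact hint.1.integral_kernel_compProd

theorem integral_mul_kernelOp {ρ : Measure E} (hchain : IsMarkovChain P X κ)
    (hstat : ∀ n, P.map (X n) = ρ) {m : ℕ} {Z : Ω → ℂ} (hZ : Measurable[pastSigma X m] Z)
    (hZ1 : ∀ ω, ‖Z ω‖ ≤ 1) (a : ℕ) {g : E → ℝ} (hg : Measurable g) {c : ℝ} (hc : ∀ x, |g x| ≤ c) :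
    ∫ ω, Z ω * (g (X (m + a) ω) : ℝ) ∂P = ∫ ω, Z ω * (kernelOp κ a g (X m ω) : ℝ) ∂P := by
  have : IsProbabilityMeasure ρ := by
    rw [← hstat 0]; exact Measure.isProbabilityMeasure_map (hchain.1 0).aemeasurable
  induction a generalizing g with
  | zero => rw [kernelOp_zero κ hg]; rfl
  | succ a ih =>
    have h1 := integral_mul_transition hchain hstat
      (hZ.mono (pastSigma_mono X (Nat.le_add_right m a)) le_rfl) hZ1
      (Φ := fun p => g p.2) (by fun_prop)
      (Integrable.of_bound (by fun_prop : Measurable fun p : E × E => g p.2).aestronglyMeasurable c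
        (ae_of_all _ fun p => hc p.2))
    have h2 : kernelOp κ (a + 1) g = kernelOp κ a fun x => ∫ y, g y ∂κ x := by
      funext x
      simp only [kernelOp, kernelIter]
      rw [Kernel.integral_comp]
      exact integrable_of_measurable_of_abs_le hg hc
    rw [← add_assoc, h1, h2, ← ih (measurable_integral_kernel κ hg) (abs_integral_kernel_le κ hc)]

end Chain

/-- The remainder of `exp (i x)` after its second order Taylor polynomial. -/
noncomputable def expRem (x : ℝ) : ℂ :=
  Complex.exp (x * Complex.I) - (1 + x * Complex.I - (x ^ 2 / 2 : ℝ))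

theorem continuous_expRem : Continuous expRem := by
  unfold expRem
  fun_prop

theorem norm_expRem_le_cube {x : ℝ} (hx : |x| ≤ 1) : ‖expRem x‖ ≤ |x| ^ 3 := by
  have hn : ‖(x : ℂ) * Complex.I‖ = |x| := by simp
  have h := Complex.exp_bound (x := (x : ℂ) * Complex.I) (by rwa [hn]) (n := 3) (by norm_num)
  rw [hn] at h
  have h2 : ∑ m ∈ Finset.range 3, ((x : ℂ) * Complex.I) ^ m / m.factorial =
      1 + x * Complex.I - (x ^ 2 / 2 : ℝ) := by
    simp [Finset.sum_range_succ, mul_pow, Nat.factorial]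
    ring
  rw [h2] at h
  refine h.trans (mul_le_of_le_one_right (by positivity) ?_)
  norm_num [Nat.factorial]

theorem norm_expRem_le_sq (x : ℝ) : ‖expRem x‖ ≤ 4 * x ^ 2 := by
  by_cases hx : |x| ≤ 1
  · have h1 := norm_expRem_le_cube hx
    have h2 : |x| ^ 3 ≤ |x| ^ 2 := pow_le_pow_of_le_one (abs_nonneg _) hx (by norm_num)
    rw [sq_abs] at h2
    nlinarith [sq_nonneg x]
  · have h1 : ‖expRem x‖ ≤ 1 + (1 + |x| + x ^ 2 / 2) := by
      refine (norm_sub_le _ _).trans (add_le_add (Complex.norm_exp_ofReal_mul_I x).le ?_)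
      refine (norm_sub_le _ _).trans (add_le_add ((norm_add_le _ _).trans ?_) ?_)
      · simp
      · rw [Complex.norm_real, Real.norm_of_nonneg (by positivity)]
    push Not at hx
    nlinarith [sq_abs x]

theorem tendsto_mul_integral_norm_expRem {α : Type*} [MeasurableSpace α] {ν : Measure α}
    {d : α → ℝ} (hdm : Measurable d) (hd : Integrable (fun p => d p ^ 2) ν) (t : ℝ) :
    Tendsto (fun n : ℕ => (n : ℝ) * ∫ p, ‖expRem (t / √n * d p)‖ ∂ν) atTop (nhds 0) := by
  have h0 : (0 : ℝ) = ∫ _, 0 ∂ν := by simp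
  simp_rw [← integral_const_mul]
  rw [h0]
  refine tendsto_integral_of_dominated_convergence (fun p => 4 * t ^ 2 * d p ^ 2) ?_
    (hd.const_mul _) ?_ ?_
  · intro n
    exact ((continuous_expRem.measurable.comp (hdm.const_mul _)).norm.const_mul
      _).aestronglyMeasurable
  · intro n
    refine ae_of_all _ fun p => ?_
    rw [Real.norm_of_nonneg (by positivity)]
    rcases Nat.eq_zero_or_pos n with rfl | hn
    · simp; positivity
    have hn' : (0 : ℝ) < n := by exact_mod_cast hn
    calc (n : ℝ) * ‖expRem (t / √n * d p)‖ ≤ n * (4 * (t / √n * d p) ^ 2) := by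
          gcongr; exact norm_expRem_le_sq _
      _ = 4 * t ^ 2 * d p ^ 2 := by
          rw [mul_pow, div_pow, Real.sq_sqrt hn'.le]; field_simp
  · refine ae_of_all _ fun p => ?_
    have hs : Tendsto (fun n : ℕ => √(n : ℝ)) atTop atTop :=
      Real.tendsto_sqrt_atTop.comp tendsto_natCast_atTop_atTop
    have h1 : Tendsto (fun n : ℕ => |t * d p| ^ 3 / √(n : ℝ)) atTop (nhds 0) :=
      tendsto_const_nhds.div_atTop hs
    refine squeeze_zero' (Eventually.of_forall fun n => by positivity) ?_ h1
    filter_upwards [hs.eventually_ge_atTop |t * d p|, eventually_gt_atTop 0] with n hn hn0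
    have hn' : (0 : ℝ) < n := by exact_mod_cast hn0
    have hsn : 0 < √(n : ℝ) := Real.sqrt_pos.2 hn'
    have e1 : |t / √n * d p| = |t * d p| / √n := by
      rw [div_mul_eq_mul_div, abs_div, abs_of_pos hsn]
    calc (n : ℝ) * ‖expRem (t / √n * d p)‖ ≤ n * |t / √n * d p| ^ 3 := by
          gcongr
          exact norm_expRem_le_cube (by rw [e1, div_le_one hsn]; exact hn)
      _ = |t * d p| ^ 3 / √n := by
          rw [e1, div_pow, pow_succ (√(n : ℝ)) 2, Real.sq_sqrt hn'.le]
          field_simp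

theorem norm_exp_mul_I_sub_le (x y : ℝ) :
    ‖Complex.exp (x * Complex.I) - Complex.exp (y * Complex.I)‖ ≤ |x - y| := by
  have h1 : Complex.exp (x * Complex.I) - Complex.exp (y * Complex.I) =
      Complex.exp (y * Complex.I) * (Complex.exp (Complex.I * ((x - y : ℝ) : ℂ)) - 1) := by
    rw [mul_sub, ← Complex.exp_add]
    push_cast
    ring_nf
  rw [h1, norm_mul, Complex.norm_exp_ofReal_mul_I, one_mul]
  exact Real.norm_exp_I_mul_ofReal_sub_one_le

theorem exists_bounded_mean_zero_approx {E : Type*} [MeasurableSpace E] {ρ : Measure E}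
    [IsProbabilityMeasure ρ] {s : E → ℝ} (hsm : Measurable s) (hs : Integrable s ρ)
    (hs0 : ∫ x, s x ∂ρ = 0) {η : ℝ} (hη : 0 < η) :
    ∃ g : E → ℝ, ∃ c : ℝ, 0 < c ∧ Measurable g ∧ (∀ x, |g x| ≤ c) ∧ ∫ x, g x ∂ρ = 0 ∧
      ∫ x, |s x - g x| ∂ρ ≤ η := by
  let b : ℕ → E → ℝ := fun N => {x | |s x| ≤ N}.indicator s
  have hS (N : ℕ) : MeasurableSet {x | |s x| ≤ (N : ℝ)} :=
    measurableSet_le hsm.abs measurable_const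
  have hbm (N : ℕ) : Measurable (b N) := hsm.indicator (hS N)
  have hbi (N : ℕ) : Integrable (b N) ρ := hs.indicator (hS N)
  have hlim : Tendsto (fun N => ∫ x, |s x - b N x| ∂ρ) atTop (nhds 0) := by
    rw [show (0 : ℝ) = ∫ _, 0 ∂ρ by simp]
    refine tendsto_integral_of_dominated_convergence (fun x => |s x|)
      (fun N => (hsm.sub (hbm N)).abs.aestronglyMeasurable) hs.abs
      (fun N => ae_of_all _ fun x => ?_) (ae_of_all _ fun x => ?_)
    · by_cases hx : |s x| ≤ N <;> simp [b, hx]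
    · refine tendsto_const_nhds.congr' ?_
      filter_upwards [tendsto_natCast_atTop_atTop.eventually_ge_atTop |s x|] with N hN
      simp [b, hN]
  obtain ⟨N, hN⟩ := (hlim.eventually (gt_mem_nhds (half_pos hη))).exists
  have hbN (x : E) : |b N x| ≤ N := by
    by_cases hx : |s x| ≤ N <;> simp [b, hx]
  have hm : |∫ x, b N x ∂ρ| ≤ ∫ x, |s x - b N x| ∂ρ := by
    calc |∫ x, b N x ∂ρ| = |∫ x, (s x - b N x) ∂ρ| := by
          rw [integral_sub hs (hbi N), hs0, zero_sub, abs_neg]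
      _ ≤ _ := abs_integral_le_integral_abs
  refine ⟨fun x => b N x - ∫ y, b N y ∂ρ, N + |∫ y, b N y ∂ρ| + 1, by positivity,
    (hbm N).sub_const _, fun x => (abs_sub _ _).trans (by linarith [hbN x]), ?_, ?_⟩
  · rw [integral_sub (hbi N) (integrable_const _)]; simp
  · have h1 : ∫ x, |s x - (b N x - ∫ y, b N y ∂ρ)| ∂ρ ≤
        ∫ x, (|s x - b N x| + |∫ y, b N y ∂ρ|) ∂ρ := by
      refine integral_mono (hs.sub ((hbi N).sub (integrable_const _))).abs
        ((hs.sub (hbi N)).abs.add (integrable_const _)) fun x => ?_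
      simp only
      rw [← sub_add]
      exact abs_add_le _ _
    have hsb : Integrable (fun x => |s x - b N x|) ρ := (hs.sub (hbi N)).abs
    rw [integral_add hsb (integrable_const _)] at h1
    simp only [integral_const, probReal_univ, smul_eq_mul, one_mul] at h1
    linarith

section MartingaleCLT

variable {Ω E : Type*}

/-- `exp (iθ ∑_{k < n} d (X k, X (k+1)))`. -/
noncomputable def expSum (X : ℕ → Ω → E) (d : E × E → ℝ) (θ : ℝ) (n : ℕ) (ω : Ω) : ℂ :=
  Complex.exp ((θ * ∑ k ∈ Finset.range n, d (X k ω, X (k + 1) ω) : ℝ) * Complex.I)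

theorem norm_expSum (X : ℕ → Ω → E) (d : E × E → ℝ) (θ : ℝ) (n : ℕ) (ω : Ω) :
    ‖expSum X d θ n ω‖ = 1 := Complex.norm_exp_ofReal_mul_I _

variable [MeasurableSpace E]

theorem measurable_expSum (X : ℕ → Ω → E) {d : E × E → ℝ} (hd : Measurable d) (θ : ℝ) (n : ℕ) :
    Measurable[pastSigma X n] (expSum X d θ n) := by
  have h1 : Measurable[pastSigma X n]
      fun ω => θ * ∑ k ∈ Finset.range n, d (X k ω, X (k + 1) ω) := by
    refine Measurable.const_mul (Finset.measurable_sum _ fun k hk => ?_) _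
    have hk := Finset.mem_range.1 hk
    exact hd.comp ((measurable_pastSigma X hk.le).prodMk (measurable_pastSigma X hk))
  have h2 : Measurable fun x : ℝ => Complex.exp (x * Complex.I) := by fun_prop
  exact h2.comp h1

variable [MeasurableSpace Ω] {P : Measure Ω} {X : ℕ → Ω → E} {κ : Kernel E E} {ρ : Measure E}

theorem integrable_mul_ofReal {Z : Ω → ℂ} {u : Ω → ℝ} (hZ : AEStronglyMeasurable Z P)
    (hZ1 : ∀ ω, ‖Z ω‖ ≤ 1) (hu : Integrable u P) : Integrable (fun ω => Z ω * (u ω : ℂ)) P :=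
  hu.ofReal.bdd_mul (c := 1) hZ (ae_of_all _ hZ1)

theorem norm_integral_mul_ofReal_le {Z : Ω → ℂ} {u : Ω → ℝ} (hZ1 : ∀ ω, ‖Z ω‖ ≤ 1)
    (hu : Integrable u P) : ‖∫ ω, Z ω * (u ω : ℂ) ∂P‖ ≤ ∫ ω, |u ω| ∂P := by
  refine norm_integral_le_of_norm_le hu.abs (ae_of_all _ fun ω => ?_)
  rw [norm_mul, Complex.norm_real, Real.norm_eq_abs]
  exact mul_le_of_le_one_left (abs_nonneg _) (hZ1 ω)

theorem integral_comp_chain (hchain : IsMarkovChain P X κ) (hstat : ∀ n, P.map (X n) = ρ)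
    {g : E → ℝ} (hg : Measurable g) (n : ℕ) : ∫ ω, g (X n ω) ∂P = ∫ x, g x ∂ρ := by
  rw [← hstat n, integral_map (hchain.1 n).aemeasurable hg.aestronglyMeasurable]

theorem integrable_comp_chain (hchain : IsMarkovChain P X κ) (hstat : ∀ n, P.map (X n) = ρ)
    {g : E → ℝ} (hg : Measurable g) (hgi : Integrable g ρ) (n : ℕ) :
    Integrable (fun ω => g (X n ω)) P := by
  rw [← hstat n, integrable_map_measure hg.aestronglyMeasurable (hchain.1 n).aemeasurable] at hgi
  exact hgi

variable [IsProbabilityMeasure P]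

theorem integrable_expSum (hchain : IsMarkovChain P X κ) {d : E × E → ℝ} (hd : Measurable d)
    (θ : ℝ) (n : ℕ) : Integrable (expSum X d θ n) P :=
  Integrable.of_bound
    ((measurable_expSum X hd θ n).mono (pastSigma_le hchain.1 n) le_rfl).aestronglyMeasurable 1
    (ae_of_all _ fun ω => (norm_expSum X d θ n ω).le)

variable [IsMarkovKernel κ]

theorem integral_comp_pair (hchain : IsMarkovChain P X κ) (hstat : ∀ n, P.map (X n) = ρ)
    {d : E × E → ℝ} (hd : Measurable d) (n : ℕ) :
    ∫ ω, d (X n ω, X (n + 1) ω) ∂P = ∫ p, d p ∂(ρ ⊗ₘ κ) := by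
  rw [← map_pair hchain hstat n, integral_map
    ((hchain.1 n).prodMk (hchain.1 (n + 1))).aemeasurable hd.aestronglyMeasurable]

theorem integrable_comp_pair (hchain : IsMarkovChain P X κ) (hstat : ∀ n, P.map (X n) = ρ)
    {d : E × E → ℝ} (hd : Measurable d) (hdi : Integrable d (ρ ⊗ₘ κ)) (n : ℕ) :
    Integrable (fun ω => d (X n ω, X (n + 1) ω)) P := by
  rw [← map_pair hchain hstat n, integrable_map_measure hd.aestronglyMeasurable
    ((hchain.1 n).prodMk (hchain.1 (n + 1))).aemeasurable] at hdi
  exact hdi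

theorem integral_norm_expSum_sub_le (hchain : IsMarkovChain P X κ) (hstat : ∀ n, P.map (X n) = ρ)
    {d : E × E → ℝ} (hd : Measurable d) (hdi : Integrable d (ρ ⊗ₘ κ)) (θ : ℝ) (m a : ℕ) :
    ∫ ω, ‖expSum X d θ (m + a) ω - expSum X d θ m ω‖ ∂P ≤ |θ| * (a * ∫ p, |d p| ∂(ρ ⊗ₘ κ)) := by
  have hk (k : ℕ) : Integrable (fun ω => |d (X k ω, X (k + 1) ω)|) P :=
    (integrable_comp_pair hchain hstat hd hdi k).abs
  have hle (ω : Ω) : ‖expSum X d θ (m + a) ω - expSum X d θ m ω‖ ≤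
      |θ| * ∑ k ∈ Finset.range a, |d (X (m + k) ω, X (m + k + 1) ω)| := by
    refine (norm_exp_mul_I_sub_le _ _).trans ?_
    rw [← mul_sub, abs_mul, Finset.sum_range_add, add_sub_cancel_left]
    gcongr
    exact Finset.abs_sum_le_sum_abs _ _
  calc _ ≤ ∫ ω, |θ| * ∑ k ∈ Finset.range a, |d (X (m + k) ω, X (m + k + 1) ω)| ∂P :=
        integral_mono ((integrable_expSum hchain hd θ _).sub (integrable_expSum hchain hd θ _)).norm
          ((integrable_finsetSum _ fun k _ => hk (m + k)).const_mul _) hle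
    _ = _ := by
        rw [integral_const_mul, integral_finsetSum _ fun k _ => hk (m + k)]
        simp_rw [integral_comp_pair hchain hstat hd.abs]
        simp

/-- The chain forgets the past exponential sums, uniformly in time. -/
theorem exists_norm_integral_expSum_mul_le [IsProbabilityMeasure ρ]
    (hchain : IsMarkovChain P X κ) (hstat : ∀ n, P.map (X n) = ρ) (hκ : Kernel.Invariant κ ρ)
    (hgeo : GeometricallyErgodic κ ρ)
    {d : E × E → ℝ} (hd : Measurable d) (hdi : Integrable d (ρ ⊗ₘ κ))
    {s : E → ℝ} (hsm : Measurable s) (hs : Integrable s ρ) (hs0 : ∫ x, s x ∂ρ = 0)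
    {η : ℝ} (hη : 0 < η) :
    ∃ K : ℝ, ∀ (θ : ℝ) (j : ℕ), ‖∫ ω, expSum X d θ j ω * (s (X j ω) : ℝ) ∂P‖ ≤ η + K * |θ| := by
  obtain ⟨g, c, hc, hgm, hgc, hg0, hsg⟩ := exists_bounded_mean_zero_approx hsm hs hs0 (half_pos hη)
  obtain ⟨K, l, hK, hl0, hl1, h⟩ := exists_integral_abs_kernelOp_sub_le_mul hκ hgeo
  have hlim : Tendsto (fun n : ℕ => c * (K * l ^ n)) atTop (nhds 0) := by
    simpa using ((tendsto_pow_atTop_nhds_zero_of_lt_one hl0.le hl1).const_mul K).const_mul c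
  obtain ⟨L, hL⟩ := (hlim.eventually (gt_mem_nhds (half_pos hη))).exists
  have hgi : Integrable g ρ := integrable_of_measurable_of_abs_le hgm hgc
  have hTL : ∫ x, |kernelOp κ L g x| ∂ρ ≤ η / 2 := by
    have := h g hgm c hc hgc L
    simp only [hg0, sub_zero] at this
    linarith
  set D := ∫ p, |d p| ∂(ρ ⊗ₘ κ)
  have hD : 0 ≤ D := integral_nonneg fun p => abs_nonneg _
  refine ⟨c * (L * D), fun θ j => ?_⟩
  have hZm (n : ℕ) : AEStronglyMeasurable (expSum X d θ n) P :=
    (integrable_expSum hchain hd θ n).1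
  have hZ1 (n : ℕ) (ω : Ω) : ‖expSum X d θ n ω‖ ≤ 1 := (norm_expSum X d θ n ω).le
  have hgX (n : ℕ) := integrable_comp_chain hchain hstat hgm hgi n
  have hsX (n : ℕ) := integrable_comp_chain hchain hstat hsm hs n
  have hsgX : Integrable (fun ω => s (X j ω) - g (X j ω)) P := (hsX j).sub (hgX j)
  have hsplit : ∫ ω, expSum X d θ j ω * (s (X j ω) : ℝ) ∂P =
      ∫ ω, expSum X d θ j ω * ((s (X j ω) - g (X j ω) : ℝ) : ℂ) ∂P +
      ∫ ω, expSum X d θ j ω * (g (X j ω) : ℝ) ∂P := by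
    rw [← integral_add (integrable_mul_ofReal (hZm j) (hZ1 j) hsgX)
      (integrable_mul_ofReal (hZm j) (hZ1 j) (hgX j))]
    congr with ω
    push_cast
    ring
  have h1 : ‖∫ ω, expSum X d θ j ω * ((s (X j ω) - g (X j ω) : ℝ) : ℂ) ∂P‖ ≤ η / 2 := by
    refine (norm_integral_mul_ofReal_le (hZ1 j) hsgX).trans ?_
    rw [integral_comp_chain hchain hstat (g := fun x => |s x - g x|) (hsm.sub hgm).abs j]
    exact hsg
  have hshift (m a : ℕ) (ha : a ≤ L)
      (hma : ‖∫ ω, expSum X d θ m ω * (g (X (m + a) ω) : ℝ) ∂P‖ ≤ η / 2) :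
      ‖∫ ω, expSum X d θ (m + a) ω * (g (X (m + a) ω) : ℝ) ∂P‖ ≤ η / 2 + c * (L * D) * |θ| := by
    have hdiff : ∫ ω, expSum X d θ (m + a) ω * (g (X (m + a) ω) : ℝ) ∂P =
        ∫ ω, (expSum X d θ (m + a) ω - expSum X d θ m ω) * (g (X (m + a) ω) : ℝ) ∂P +
        ∫ ω, expSum X d θ m ω * (g (X (m + a) ω) : ℝ) ∂P := by
      rw [← integral_add _ (integrable_mul_ofReal (hZm m) (hZ1 m) (hgX _))]
      · congr with ω
        ring
      · simp_rw [sub_mul]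
        exact (integrable_mul_ofReal (hZm _) (hZ1 _) (hgX _)).sub
          (integrable_mul_ofReal (hZm m) (hZ1 m) (hgX _))
    have h2 : ‖∫ ω, (expSum X d θ (m + a) ω - expSum X d θ m ω) * (g (X (m + a) ω) : ℝ) ∂P‖ ≤
        c * (L * D) * |θ| := by
      have hint := ((integrable_expSum hchain hd θ (m + a)).sub
        (integrable_expSum hchain hd θ m)).norm
      refine (norm_integral_le_of_norm_le (hint.const_mul c) (ae_of_all _ fun ω => ?_)).trans ?_
      · rw [norm_mul, Complex.norm_real, Real.norm_eq_abs, mul_comm]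
        exact mul_le_mul_of_nonneg_right (hgc _) (norm_nonneg _)
      · rw [integral_const_mul, mul_assoc]
        refine mul_le_mul_of_nonneg_left
          ((integral_norm_expSum_sub_le hchain hstat hd hdi θ m a).trans ?_) hc.le
        rw [mul_comm |θ|]
        gcongr
    rw [hdiff]
    exact (norm_add_le _ _).trans (by linarith)
  have h2 : ‖∫ ω, expSum X d θ j ω * (g (X j ω) : ℝ) ∂P‖ ≤ η / 2 + c * (L * D) * |θ| := by
    rcases le_total L j with hLj | hjL
    · obtain ⟨m, rfl⟩ : ∃ m, j = m + L := ⟨j - L, by omega⟩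
      refine hshift m L le_rfl ?_
      rw [integral_mul_kernelOp hchain hstat (measurable_expSum X hd θ m) (hZ1 m) L hgm hgc]
      have hT := measurable_kernelOp κ L hgm
      have hTi : Integrable (kernelOp κ L g) ρ :=
        integrable_of_measurable_of_abs_le hT (abs_integral_kernel_le _ hgc)
      refine (norm_integral_mul_ofReal_le (hZ1 m)
        (integrable_comp_chain hchain hstat hT hTi m)).trans ?_
      rwa [integral_comp_chain hchain hstat (g := fun x => |kernelOp κ L g x|) hT.abs m]
    · have h3 := hshift 0 j hjL (by
        have : ∫ ω, g (X (0 + j) ω) ∂P = 0 := by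
          rw [integral_comp_chain hchain hstat hgm, hg0]
        simp only [expSum, Finset.range_zero, Finset.sum_empty, mul_zero, Complex.ofReal_zero,
          zero_mul, Complex.exp_zero, one_mul]
        rw [integral_complex_ofReal, this]
        simpa using (half_pos hη).le)
      simpa using h3
  rw [hsplit]
  exact (norm_add_le _ _).trans (by linarith)

end MartingaleCLT

theorem norm_sub_pow_mul_le {a : ℕ → ℂ} {c : ℂ} {e : ℝ} (hc : ‖c‖ ≤ 1)
    (h : ∀ j, ‖a (j + 1) - c * a j‖ ≤ e) (n : ℕ) : ‖a n - c ^ n * a 0‖ ≤ n * e := by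
  induction n with
  | zero => simp
  | succ n ih =>
    have h1 : a (n + 1) - c ^ (n + 1) * a 0 = (a (n + 1) - c * a n) + c * (a n - c ^ n * a 0) := by
      ring
    rw [h1]
    refine (norm_add_le _ _).trans ?_
    rw [norm_mul]
    have h2 : ‖c‖ * ‖a n - c ^ n * a 0‖ ≤ 1 * (n * e) := by gcongr
    push_cast
    linarith [h n]

section MartingaleCLT

variable {Ω E : Type*} [MeasurableSpace E] [MeasurableSpace Ω] {P : Measure Ω} {X : ℕ → Ω → E}
  {κ : Kernel E E} {ρ : Measure E} [IsProbabilityMeasure P] [IsMarkovKernel κ]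

theorem norm_integral_expSum_succ_sub_le [IsProbabilityMeasure ρ] (hchain : IsMarkovChain P X κ)
    (hstat : ∀ n, P.map (X n) = ρ) {d : E × E → ℝ} (hd : Measurable d)
    (hdi : Integrable d (ρ ⊗ₘ κ)) (hd2 : Integrable (fun p => d p ^ 2) (ρ ⊗ₘ κ))
    (hd0 : ∀ᵐ x ∂ρ, ∫ y, d (x, y) ∂κ x = 0) (v θ : ℝ) (j : ℕ) :
    ‖∫ ω, expSum X d θ (j + 1) ω ∂P -
        ((1 - θ ^ 2 * v / 2 : ℝ) : ℂ) * ∫ ω, expSum X d θ j ω ∂P‖ ≤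
      θ ^ 2 / 2 * ‖∫ ω, expSum X d θ j ω * ((∫ y, d (X j ω, y) ^ 2 ∂κ (X j ω)) - v : ℝ) ∂P‖ +
        ∫ p, ‖expRem (θ * d p)‖ ∂(ρ ⊗ₘ κ) := by
  have hZm : AEStronglyMeasurable (expSum X d θ j) P := (integrable_expSum hchain hd θ j).1
  have hZi := integrable_expSum hchain hd θ j
  have hZ1 (ω : Ω) : ‖expSum X d θ j ω‖ ≤ 1 := (norm_expSum X d θ j ω).le
  have hD := integrable_comp_pair hchain hstat hd hdi j
  have hD2 := integrable_comp_pair hchain hstat (hd.pow_const 2) hd2 j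
  have hRm : Measurable fun p => ‖expRem (θ * d p)‖ :=
    (continuous_expRem.measurable.comp (hd.const_mul θ)).norm
  have hRi : Integrable (fun p => ‖expRem (θ * d p)‖) (ρ ⊗ₘ κ) := by
    refine (hd2.const_mul (4 * θ ^ 2)).mono' hRm.aestronglyMeasurable (ae_of_all _ fun p => ?_)
    rw [norm_norm]
    exact (norm_expRem_le_sq _).trans_eq (by ring)
  have hRX := integrable_comp_pair hchain hstat hRm hRi j
  have hRXc : Integrable (fun ω => expRem (θ * d (X j ω, X (j + 1) ω))) P := by
    refine (integrable_norm_iff ?_).1 hRX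
    exact (continuous_expRem.measurable.comp ((hd.comp ((hchain.1 j).prodMk
      (hchain.1 (j + 1)))).const_mul θ)).aestronglyMeasurable
  have hZD : ∫ ω, expSum X d θ j ω * (d (X j ω, X (j + 1) ω) : ℝ) ∂P = 0 := by
    rw [integral_mul_transition hchain hstat (measurable_expSum X hd θ j) hZ1 hd hdi]
    rw [← hstat j] at hd0
    refine integral_eq_zero_of_ae ?_
    filter_upwards [ae_of_ae_map (hchain.1 j).aemeasurable hd0] with ω hω
    simp [hω]
  have hsX : Integrable (fun ω => ∫ y, d (X j ω, y) ^ 2 ∂κ (X j ω)) P := by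
    have h1 := integrable_integral_of_integrable_compProd hd2
    have h2 : Measurable fun x => ∫ y, d (x, y) ^ 2 ∂κ x :=
      ((hd.pow_const 2).stronglyMeasurable.integral_kernel_prod_right' (κ := κ)).measurable
    exact integrable_comp_chain hchain hstat h2 h1 j
  have hZs : Integrable (fun ω => expSum X d θ j ω *
      ((∫ y, d (X j ω, y) ^ 2 ∂κ (X j ω)) - v : ℝ)) P :=
    integrable_mul_ofReal hZm hZ1 (hsX.sub (integrable_const v))
  have hZD2 : ∫ ω, expSum X d θ j ω * ((d (X j ω, X (j + 1) ω) ^ 2 : ℝ) : ℂ) ∂P =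
      ∫ ω, expSum X d θ j ω * ((∫ y, d (X j ω, y) ^ 2 ∂κ (X j ω)) - v : ℝ) ∂P +
        v * ∫ ω, expSum X d θ j ω ∂P := by
    rw [integral_mul_transition hchain hstat (measurable_expSum X hd θ j) hZ1
      (Φ := fun p => d p ^ 2) (hd.pow_const 2) hd2, ← integral_const_mul,
      ← integral_add hZs (hZi.const_mul _)]
    congr with ω
    push_cast
    ring
  have hR : ‖∫ ω, expSum X d θ j ω * expRem (θ * d (X j ω, X (j + 1) ω)) ∂P‖ ≤
      ∫ p, ‖expRem (θ * d p)‖ ∂(ρ ⊗ₘ κ) := by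
    rw [← integral_comp_pair hchain hstat hRm j]
    refine norm_integral_le_of_norm_le hRX (ae_of_all _ fun ω => ?_)
    rw [norm_mul]
    exact mul_le_of_le_one_left (norm_nonneg _) (hZ1 ω)
  have hiR : Integrable (fun ω => expSum X d θ j ω * expRem (θ * d (X j ω, X (j + 1) ω))) P :=
    hRXc.bdd_mul (c := 1) hZm (ae_of_all _ hZ1)
  have hiD := (integrable_mul_ofReal hZm hZ1 hD).const_mul (θ * Complex.I)
  have hiD2 := (integrable_mul_ofReal hZm hZ1 hD2).const_mul ((-(θ ^ 2 / 2) : ℝ) : ℂ)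
  have hexp : ∫ ω, expSum X d θ (j + 1) ω ∂P = ∫ ω, expSum X d θ j ω ∂P +
      ((θ * Complex.I) * ∫ ω, expSum X d θ j ω * (d (X j ω, X (j + 1) ω) : ℝ) ∂P +
      (((-(θ ^ 2 / 2) : ℝ) : ℂ) *
        ∫ ω, expSum X d θ j ω * ((d (X j ω, X (j + 1) ω) ^ 2 : ℝ) : ℂ) ∂P +
      ∫ ω, expSum X d θ j ω * expRem (θ * d (X j ω, X (j + 1) ω)) ∂P)) := by
    rw [← integral_const_mul, ← integral_const_mul, ← integral_add hiD2 hiR,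
      ← integral_add hiD (by exact hiD2.add hiR), ← integral_add hZi
        (by exact hiD.add (hiD2.add hiR))]
    congr with ω
    have h1 : expSum X d θ (j + 1) ω = expSum X d θ j ω *
        Complex.exp ((θ * d (X j ω, X (j + 1) ω) : ℝ) * Complex.I) := by
      rw [expSum, expSum, ← Complex.exp_add, Finset.sum_range_succ]
      push_cast
      ring_nf
    rw [h1, expRem]
    push_cast
    ring
  rw [hexp, hZD, hZD2]
  set A := ∫ ω, expSum X d θ j ω * ((∫ y, d (X j ω, y) ^ 2 ∂κ (X j ω)) - v : ℝ) ∂P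
  set R := ∫ ω, expSum X d θ j ω * expRem (θ * d (X j ω, X (j + 1) ω)) ∂P
  set a := ∫ ω, expSum X d θ j ω ∂P
  have heq : a + ((θ * Complex.I) * 0 + (((-(θ ^ 2 / 2) : ℝ) : ℂ) * (A + v * a) + R)) -
      ((1 - θ ^ 2 * v / 2 : ℝ) : ℂ) * a = ((-(θ ^ 2 / 2) : ℝ) : ℂ) * A + R := by
    push_cast
    ring
  rw [heq]
  refine (norm_add_le _ _).trans ?_
  rw [norm_mul, Complex.norm_real, norm_neg, Real.norm_of_nonneg (by positivity)]
  gcongr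

/-- Martingale central limit theorem along a chain, in terms of characteristic functions. -/
theorem tendsto_integral_expSum [IsProbabilityMeasure ρ] (hchain : IsMarkovChain P X κ)
    (hstat : ∀ n, P.map (X n) = ρ) (hκ : Kernel.Invariant κ ρ) (hgeo : GeometricallyErgodic κ ρ)
    {d : E × E → ℝ} (hd : Measurable d) (hdi : Integrable d (ρ ⊗ₘ κ))
    (hd2 : Integrable (fun p => d p ^ 2) (ρ ⊗ₘ κ))
    (hd0 : ∀ᵐ x ∂ρ, ∫ y, d (x, y) ∂κ x = 0) (t : ℝ) :
    Tendsto (fun n : ℕ => ∫ ω, expSum X d (t / √n) n ω ∂P) atTop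
      (nhds (Complex.exp (-(t ^ 2 * ∫ p, d p ^ 2 ∂(ρ ⊗ₘ κ)) / 2 : ℝ))) := by
  set v := ∫ p, d p ^ 2 ∂(ρ ⊗ₘ κ) with hv
  have hv0 : 0 ≤ v := integral_nonneg fun p => sq_nonneg _
  have hsi := integrable_integral_of_integrable_compProd hd2
  have hsm : Measurable fun x => ∫ y, d (x, y) ^ 2 ∂κ x :=
    ((hd.pow_const 2).stronglyMeasurable.integral_kernel_prod_right' (κ := κ)).measurable
  have hs0 : ∫ x, ((∫ y, d (x, y) ^ 2 ∂κ x) - v) ∂ρ = 0 := by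
    rw [integral_sub hsi (integrable_const v), hv, Measure.integral_compProd hd2]
    simp
  have hpow : Tendsto (fun n : ℕ => ((1 - (t / √n) ^ 2 * v / 2 : ℝ) : ℂ) ^ n) atTop
      (nhds (Complex.exp (-(t ^ 2 * v) / 2 : ℝ))) := by
    refine (Complex.tendsto_one_add_div_pow_exp ((-(t ^ 2 * v) / 2 : ℝ) : ℂ)).congr fun n => ?_
    rw [div_pow, Real.sq_sqrt n.cast_nonneg]
    push_cast
    ring
  have hsqrt : Tendsto (fun n : ℕ => √(n : ℝ)) atTop atTop :=
    Real.tendsto_sqrt_atTop.comp tendsto_natCast_atTop_atTop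
  have hθ : Tendsto (fun n : ℕ => t / √n) atTop (nhds 0) := hsqrt.const_div_atTop t
  have hdiff : Tendsto (fun n : ℕ => ∫ ω, expSum X d (t / √n) n ω ∂P -
      ((1 - (t / √n) ^ 2 * v / 2 : ℝ) : ℂ) ^ n) atTop (nhds 0) := by
    rw [Metric.tendsto_nhds]
    intro δ hδ
    simp only [dist_zero_right]
    have hη : 0 < δ / (2 * (t ^ 2 + 1)) := by positivity
    obtain ⟨K, hK⟩ := exists_norm_integral_expSum_mul_le hchain hstat hκ hgeo hd hdi
      (s := fun x => (∫ y, d (x, y) ^ 2 ∂κ x) - v) (hsm.sub_const v)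
      (hsi.sub (integrable_const v)) hs0 hη
    have hlim : Tendsto (fun n : ℕ => t ^ 2 / 2 * (δ / (2 * (t ^ 2 + 1)) + K * |t / √n|) +
        n * ∫ p, ‖expRem (t / √n * d p)‖ ∂(ρ ⊗ₘ κ)) atTop
        (nhds (t ^ 2 / 2 * (δ / (2 * (t ^ 2 + 1)) + K * |0|) + 0)) :=
      (((hθ.abs.const_mul K).const_add _).const_mul _).add
        (tendsto_mul_integral_norm_expRem hd hd2 t)
    have hlt : t ^ 2 / 2 * (δ / (2 * (t ^ 2 + 1)) + K * |0|) + 0 < δ := by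
      rw [abs_zero, mul_zero, add_zero, add_zero]
      have : t ^ 2 / 2 * (δ / (2 * (t ^ 2 + 1))) = δ * (t ^ 2 / (t ^ 2 + 1)) / 4 := by
        field_simp
        ring
      rw [this]
      have h1 : t ^ 2 / (t ^ 2 + 1) ≤ 1 := (div_le_one (by positivity)).2 (by linarith)
      nlinarith
    have hsmall : ∀ᶠ n : ℕ in atTop, (t / √n) ^ 2 * v / 2 < 1 := by
      have : Tendsto (fun n : ℕ => (t / √n) ^ 2 * v / 2) atTop (nhds (0 ^ 2 * v / 2)) :=
        ((hθ.pow 2).mul_const v).div_const 2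
      exact this.eventually (gt_mem_nhds (by norm_num))
    filter_upwards [hlim.eventually (gt_mem_nhds hlt), hsmall, eventually_gt_atTop 0]
      with n hn hn1 hn0
    refine lt_of_le_of_lt ?_ hn
    have hc : ‖((1 - (t / √n) ^ 2 * v / 2 : ℝ) : ℂ)‖ ≤ 1 := by
      rw [Complex.norm_real, Real.norm_eq_abs, abs_le]
      have : 0 ≤ (t / √n) ^ 2 * v / 2 := by positivity
      constructor <;> linarith
    have h0 : ∫ ω, expSum X d (t / √n) 0 ω ∂P = 1 := by simp [expSum]
    have h1 := norm_sub_pow_mul_le (a := fun j => ∫ ω, expSum X d (t / √n) j ω ∂P) hc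
      (e := (t / √n) ^ 2 / 2 * (δ / (2 * (t ^ 2 + 1)) + K * |t / √n|) +
        ∫ p, ‖expRem (t / √n * d p)‖ ∂(ρ ⊗ₘ κ))
      (fun j => (norm_integral_expSum_succ_sub_le hchain hstat hd hdi hd2 hd0 v (t / √n) j).trans
        (by gcongr; exact hK (t / √n) j)) n
    simp only [h0, mul_one] at h1
    refine h1.trans_eq ?_
    rw [div_pow, Real.sq_sqrt n.cast_nonneg]
    have : (n : ℝ) ≠ 0 := by positivity
    field_simp
  simpa using hdiff.add hpow

end MartingaleCLT

theorem MeasureTheory.TendstoInDistribution.tendsto_integral {Ω Ω' : Type*}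
    [MeasurableSpace Ω] [MeasurableSpace Ω'] {P : Measure Ω} [IsProbabilityMeasure P]
    {Q : Measure Ω'} [IsProbabilityMeasure Q] {Y : ℕ → Ω → ℝ} {Z : Ω' → ℝ}
    (h : TendstoInDistribution Y atTop Z (fun _ => P) Q) {g : ℝ → ℝ} (hg : Continuous g) {M : ℝ}
    (hM : ∀ z, |g z| ≤ M) :
    Tendsto (fun n => ∫ ω, g (Y n ω) ∂P) atTop (nhds (∫ ω, g (Z ω) ∂Q)) := by
  have h1 := (ProbabilityMeasure.tendsto_iff_forall_integral_tendsto.1 h.tendsto)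
    (BoundedContinuousFunction.ofNormedAddCommGroup g hg M hM)
  simp only [ProbabilityMeasure.coe_mk, BoundedContinuousFunction.coe_ofNormedAddCommGroup] at h1
  rw [integral_map h.aemeasurable_limit hg.aestronglyMeasurable] at h1
  refine h1.congr fun n => ?_
  rw [integral_map (h.forall_aemeasurable n) hg.aestronglyMeasurable]

section ChainCLT

variable {Ω E : Type*} [MeasurableSpace E] [MeasurableSpace Ω] {P : Measure Ω} {X : ℕ → Ω → E}
  {κ : Kernel E E} {ρ : Measure E} [IsProbabilityMeasure P] [IsMarkovKernel κ]

theorem memLp_sub_integral_kernel [IsProbabilityMeasure ρ] (hκ : Kernel.Invariant κ ρ)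
    {F : E → ℝ} (hFm : Measurable F) (hF : MemLp F 2 ρ) :
    MemLp (fun p : E × E => F p.2 - ∫ y, F y ∂κ p.1) 2 (ρ ⊗ₘ κ) := by
  have hfst : MeasurePreserving (Prod.fst : E × E → E) (ρ ⊗ₘ κ) ρ :=
    ⟨measurable_fst, Measure.fst_compProd ρ κ⟩
  have hsnd : MeasurePreserving (Prod.snd : E × E → E) (ρ ⊗ₘ κ) ρ :=
    ⟨measurable_snd, (Measure.snd_compProd ρ κ).trans hκ.def⟩
  exact (hF.comp_measurePreserving hsnd).sub
    ((memLp_two_integral_kernel hκ hFm hF).1.comp_measurePreserving hfst)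

theorem ae_integral_sub_integral_kernel [IsProbabilityMeasure ρ] (hκ : Kernel.Invariant κ ρ)
    {F : E → ℝ} (hF : Integrable F ρ) :
    ∀ᵐ x ∂ρ, ∫ y, (F y - ∫ z, F z ∂κ x) ∂κ x = 0 := by
  filter_upwards [ae_integrable_of_invariant hκ hF] with x hx
  rw [integral_sub hx (integrable_const _)]
  simp

theorem integral_sq_sub_integral_kernel [IsProbabilityMeasure ρ] (hκ : Kernel.Invariant κ ρ)
    {F : E → ℝ} (hFm : Measurable F) (hF : MemLp F 2 ρ) :
    ∫ p : E × E, (F p.2 - ∫ y, F y ∂κ p.1) ^ 2 ∂(ρ ⊗ₘ κ) =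
      ∫ x, F x ^ 2 ∂ρ - ∫ x, (∫ y, F y ∂κ x) ^ 2 ∂ρ := by
  have hd := (memLp_sub_integral_kernel hκ hFm hF).integrable_sq
  have hsq := hF.integrable_sq
  have hG := (memLp_two_integral_kernel hκ hFm hF).1.integrable_sq
  rw [Measure.integral_compProd hd, ← integral_integral_of_invariant hκ hsq,
    ← integral_sub (integrable_integral_of_invariant hκ hsq) hG]
  refine integral_congr_ae ?_
  filter_upwards [ae_integrable_of_invariant hκ hsq,
    ae_integrable_of_invariant hκ (hF.integrable one_le_two)] with x hx2 hx
  have h1 (y : E) : (F y - ∫ z, F z ∂κ x) ^ 2 =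
      F y ^ 2 - ((2 * ∫ z, F z ∂κ x) * F y - (∫ z, F z ∂κ x) ^ 2) := by ring
  have h2 : Integrable (fun y => (2 * ∫ z, F z ∂κ x) * F y) (κ x) := hx.const_mul _
  have h3 : Integrable (fun y => (2 * ∫ z, F z ∂κ x) * F y - (∫ z, F z ∂κ x) ^ 2) (κ x) :=
    h2.sub (integrable_const _)
  simp only [h1]
  rw [integral_sub hx2 h3, integral_sub h2 (integrable_const _), integral_const_mul]
  simp
  ring

/-- Central limit theorem for a mean-zero functional of a geometrically ergodic chain. -/
theorem tendstoInDistribution_chain [IsProbabilityMeasure ρ] (hchain : IsMarkovChain P X κ)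
    (hstat : ∀ n, P.map (X n) = ρ) (hκ : Kernel.Invariant κ ρ) (hgeo : GeometricallyErgodic κ ρ)
    {f : E → ℝ} (hf : Measurable f) {ε : ℝ} (hε : 0 < ε)
    (hmom : Integrable (fun x => |f x| ^ (2 + ε)) ρ) (hf0 : ∫ x, f x ∂ρ = 0) :
    TendstoInDistribution (fun (n : ℕ) ω => (√n)⁻¹ * ∑ k ∈ Finset.Icc 1 n, f (X k ω)) atTop id
      (fun _ => P) (gaussianReal 0 (∑' j : ℤ, kernelCov κ ρ f f j.natAbs).toNNReal) := by
  obtain ⟨F, hFm, hF, hFf, hv⟩ := exists_poisson_solution hκ hgeo hf hε hmom hf0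
  set v := ∑' j : ℤ, kernelCov κ ρ f f j.natAbs
  have hdL := memLp_sub_integral_kernel hκ hFm hF
  have hGL := (memLp_two_integral_kernel hκ hFm hF).1
  have hGm : Measurable fun x => ∫ y, F y ∂κ x := measurable_integral_kernel κ hFm
  set d : E × E → ℝ := fun p => F p.2 - ∫ y, F y ∂κ p.1 with hd_def
  have hdm : Measurable d := (hFm.comp measurable_snd).sub (hGm.comp measurable_fst)
  have hdv : ∫ p, d p ^ 2 ∂(ρ ⊗ₘ κ) = v := by
    rw [← hv, ← integral_sq_sub_integral_kernel hκ hFm hF]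
  have hv0 : 0 ≤ v := hdv ▸ integral_nonneg fun p => sq_nonneg _
  have hXm := hchain.1
  have hYm (n : ℕ) : Measurable fun ω => (√n)⁻¹ * ∑ k ∈ Finset.Icc 1 n, f (X k ω) :=
    (Finset.measurable_sum _ fun k _ => hf.comp (hXm k)).const_mul _
  have hGi := hGL.integrable one_le_two
  have hGX (n : ℕ) := integrable_comp_chain hchain hstat hGm hGi n
  have hsum : ∀ᵐ ω ∂P, ∀ n, ∑ k ∈ Finset.Icc 1 n, f (X k ω) =
      ∑ k ∈ Finset.range n, d (X k ω, X (k + 1) ω) +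
        (∫ y, F y ∂κ (X 0 ω) - ∫ y, F y ∂κ (X n ω)) := by
    have h1 : ∀ᵐ ω ∂P, ∀ n, f (X n ω) = F (X n ω) - ∫ y, F y ∂κ (X n ω) := by
      refine ae_all_iff.2 fun n => ?_
      rw [← hstat n] at hFf
      exact ae_of_ae_map (hXm n).aemeasurable hFf
    filter_upwards [h1] with ω hω n
    induction n with
    | zero => simp
    | succ n ih =>
      rw [Finset.sum_Icc_succ_top (by omega), ih, Finset.sum_range_succ, hω (n + 1), hd_def]
      ring
  refine ⟨fun n => (hYm n).aemeasurable, aemeasurable_id, ?_⟩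
  refine ProbabilityMeasure.tendsto_iff_tendsto_charFun.2 fun t => ?_
  have hlim := tendsto_integral_expSum hchain hstat hκ hgeo hdm (hdL.integrable one_le_two)
    hdL.integrable_sq (ae_integral_sub_integral_kernel hκ (hF.integrable one_le_two)) t
  have hgauss : charFun (Measure.map id (gaussianReal 0 v.toNNReal)) t =
      Complex.exp (-(t ^ 2 * ∫ p, d p ^ 2 ∂(ρ ⊗ₘ κ)) / 2 : ℝ) := by
    rw [Measure.map_id, charFun_gaussianReal, hdv, Real.coe_toNNReal _ hv0]
    congr 1
    push_cast
    ring
  have hchar (n : ℕ) : charFun (P.map fun ω => (√n)⁻¹ * ∑ k ∈ Finset.Icc 1 n, f (X k ω)) t =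
      ∫ ω, Complex.exp ((t * ((√n)⁻¹ * ∑ k ∈ Finset.Icc 1 n, f (X k ω)) : ℝ) * Complex.I) ∂P := by
    rw [charFun_apply_real, integral_map (hYm n).aemeasurable (by fun_prop)]
    push_cast
    rfl
  simp only [ProbabilityMeasure.coe_mk, hchar, hgauss]
  have hbound (n : ℕ) :
      ‖∫ ω, Complex.exp ((t * ((√n)⁻¹ * ∑ k ∈ Finset.Icc 1 n, f (X k ω)) : ℝ) * Complex.I) ∂P -
        ∫ ω, expSum X d (t / √n) n ω ∂P‖ ≤
      |t / √n| * (2 * ∫ x, |∫ y, F y ∂κ x| ∂ρ) := by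
    have hi : Integrable (fun ω =>
        Complex.exp ((t * ((√n)⁻¹ * ∑ k ∈ Finset.Icc 1 n, f (X k ω)) : ℝ) * Complex.I)) P := by
      refine Integrable.of_bound ?_ 1
        (ae_of_all _ fun ω => (Complex.norm_exp_ofReal_mul_I _).le)
      have h2 : Measurable fun x : ℝ => Complex.exp ((t * x : ℝ) * Complex.I) := by fun_prop
      exact (h2.comp (hYm n)).aestronglyMeasurable
    have hbi : Integrable (fun ω => |∫ y, F y ∂κ (X 0 ω)| + |∫ y, F y ∂κ (X n ω)|) P :=
      (hGX 0).abs.add (hGX n).abs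
    rw [← integral_sub hi (integrable_expSum hchain hdm _ _)]
    refine (norm_integral_le_of_norm_le (hbi.const_mul |t / √n|) ?_).trans_eq ?_
    · filter_upwards [hsum] with ω hω
      refine (norm_exp_mul_I_sub_le _ _).trans ?_
      rw [hω n, ← mul_assoc, ← div_eq_mul_inv, ← mul_sub, add_sub_cancel_left, abs_mul]
      gcongr
      exact abs_sub _ _
    · rw [integral_const_mul, integral_add (hGX 0).abs (hGX n).abs,
        integral_comp_chain hchain hstat hGm.abs 0, integral_comp_chain hchain hstat hGm.abs n]
      ring
  have hsqrt : Tendsto (fun n : ℕ => √(n : ℝ)) atTop atTop :=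
    Real.tendsto_sqrt_atTop.comp tendsto_natCast_atTop_atTop
  have hz : Tendsto (fun n : ℕ => |t / √n| * (2 * ∫ x, |∫ y, F y ∂κ x| ∂ρ)) atTop (nhds 0) := by
    have : Tendsto (fun n : ℕ => t / √n) atTop (nhds 0) := hsqrt.const_div_atTop t
    simpa using this.abs.mul_const (2 * ∫ x, |∫ y, F y ∂κ x| ∂ρ)
  simpa using (squeeze_zero_norm hbound hz).add hlim

/-- Weak law of large numbers along a geometrically ergodic chain. -/
theorem tendstoInMeasure_chain_average [IsProbabilityMeasure ρ] (hchain : IsMarkovChain P X κ)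
    (hstat : ∀ n, P.map (X n) = ρ) (hκ : Kernel.Invariant κ ρ) (hgeo : GeometricallyErgodic κ ρ)
    {f : E → ℝ} (hf : Measurable f) {ε : ℝ} (hε : 0 < ε)
    (hmom : Integrable (fun x => |f x| ^ (2 + ε)) ρ) (hf0 : ∫ x, f x ∂ρ = 0) :
    TendstoInMeasure P (fun (n : ℕ) ω => (n : ℝ)⁻¹ * ∑ k ∈ Finset.Icc 1 n, f (X k ω)) atTop
      (fun _ => 0) := by
  have hclt := tendstoInDistribution_chain hchain hstat hκ hgeo hf hε hmom hf0
  set v := ∑' j : ℤ, kernelCov κ ρ f f j.natAbs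
  have hsqrt : Tendsto (fun n : ℕ => (√(n : ℝ))⁻¹) atTop (nhds 0) :=
    (Real.tendsto_sqrt_atTop.comp tendsto_natCast_atTop_atTop).inv_tendsto_atTop
  have hconst : TendstoInMeasure P (fun (n : ℕ) (_ : Ω) => (√(n : ℝ))⁻¹) atTop fun _ => 0 :=
    tendstoInMeasure_of_tendsto_ae (fun _ => aestronglyMeasurable_const) (ae_of_all _ fun _ => hsqrt)
  set A : ℕ → Ω → ℝ := fun n ω => (n : ℝ)⁻¹ * ∑ k ∈ Finset.Icc 1 n, f (X k ω) with hA
  have hAm (n : ℕ) : Measurable (A n) :=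
    (Finset.measurable_sum _ fun k _ => hf.comp (hchain.1 k)).const_mul _
  have hAeq (n : ℕ) (ω : Ω) :
      (√n)⁻¹ * ((√n)⁻¹ * ∑ k ∈ Finset.Icc 1 n, f (X k ω)) = A n ω := by
    rw [← mul_assoc, ← mul_inv, Real.mul_self_sqrt n.cast_nonneg]
  have hmin : Tendsto (fun n => ∫ ω, min |A n ω| 1 ∂P) atTop (nhds 0) := by
    have h1 := (hclt.continuous_comp_prodMk_of_tendstoInMeasure_const
      (g := fun p : ℝ × ℝ => p.2 * p.1) (by fun_prop) hconst
      (fun _ => aemeasurable_const)).tendsto_integral (g := fun x => min |x| 1) (M := 1)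
      (by fun_prop) (fun z => by
        rw [abs_of_nonneg (le_min (abs_nonneg _) zero_le_one)]
        exact min_le_right _ _)
    simpa only [hAeq, zero_mul, abs_zero, min_eq_left (zero_le_one' ℝ), integral_zero] using h1
  rw [tendstoInMeasure_iff_measureReal_norm]
  intro δ hδ
  simp only [sub_zero, Real.norm_eq_abs]
  have hm : 0 < min δ 1 := lt_min hδ one_pos
  have hz : Tendsto (fun n => (∫ ω, min |A n ω| 1 ∂P) / min δ 1) atTop (nhds 0) := by
    simpa using hmin.div_const (min δ 1)
  refine squeeze_zero (fun _ => measureReal_nonneg) (fun n => ?_) hz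
  have h0 (ω : Ω) : 0 ≤ min |A n ω| 1 := le_min (abs_nonneg _) zero_le_one
  have hi : Integrable (fun ω => min |A n ω| 1) P :=
    Integrable.of_bound ((hAm n).abs.min measurable_const).aestronglyMeasurable 1
      (ae_of_all _ fun ω => by
        rw [Real.norm_of_nonneg (h0 ω)]
        exact min_le_right _ _)
  rw [le_div_iff₀ hm, mul_comm]
  refine le_trans ?_ (mul_meas_ge_le_integral_of_nonneg (ae_of_all _ h0) hi (min δ 1))
  exact mul_le_mul_of_nonneg_left
    (measureReal_mono fun ω (hω : δ ≤ |A n ω|) => min_le_min_right 1 hω) hm.le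

end ChainCLT

section Ratio

variable {Ω : Type*} [MeasurableSpace Ω] {P : Measure Ω} [IsProbabilityMeasure P]

theorem tendsto_integral_of_tendsto_measureReal_ne {Q V : ℕ → Ω → ℝ} (hQ : ∀ n, Measurable (Q n))
    (hV : ∀ n, Measurable (V n))
    (hne : Tendsto (fun n => P.real {ω | Q n ω ≠ V n ω}) atTop (nhds 0))
    {g : ℝ → ℝ} (hg : Continuous g) {M : ℝ} (hM : ∀ z, |g z| ≤ M) {L : ℝ}
    (h : Tendsto (fun n => ∫ ω, g (V n ω) ∂P) atTop (nhds L)) :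
    Tendsto (fun n => ∫ ω, g (Q n ω) ∂P) atTop (nhds L) := by
  have hi {R : Ω → ℝ} (hR : Measurable R) : Integrable (fun ω => g (R ω)) P :=
    Integrable.of_bound (hg.measurable.comp hR).aestronglyMeasurable M (ae_of_all _ fun ω => hM _)
  have hS (n : ℕ) : MeasurableSet {ω | Q n ω ≠ V n ω} :=
    (measurableSet_eq_fun (hQ n) (hV n)).compl
  have hb (n : ℕ) : ‖∫ ω, g (Q n ω) ∂P - ∫ ω, g (V n ω) ∂P‖ ≤
      2 * M * P.real {ω | Q n ω ≠ V n ω} := by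
    rw [← integral_sub (hi (hQ n)) (hi (hV n)), mul_comm, ← smul_eq_mul,
      ← integral_indicator_const _ (hS n)]
    refine norm_integral_le_of_norm_le ((integrable_const _).indicator (hS n))
      (ae_of_all _ fun ω => ?_)
    by_cases hω : Q n ω = V n ω
    · simp [hω]
    · rw [Set.indicator_of_mem (by exact hω), Real.norm_eq_abs]
      exact (abs_sub _ _).trans (by linarith [hM (Q n ω), hM (V n ω)])
  have hz := squeeze_zero_norm hb (by simpa using hne.const_mul (2 * M))
  simpa using hz.add h

/-- Slutsky's theorem for a ratio whose denominator has a positive limit. -/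
theorem tendsto_integral_div_of_tendstoInMeasure {Y W Q : ℕ → Ω → ℝ} {v : NNReal} {r : ℝ}
    (hr : 0 < r) (hY : TendstoInDistribution Y atTop id (fun _ => P) (gaussianReal 0 v))
    (hYm : ∀ n, Measurable (Y n))
    (hW : TendstoInMeasure P W atTop fun _ => r) (hWm : ∀ n, Measurable (W n))
    (hQm : ∀ n, Measurable (Q n)) (hQ : ∀ᶠ n in atTop, ∀ ω, 0 < W n ω → Q n ω = Y n ω / W n ω)
    {g : ℝ → ℝ} (hg : Continuous g) {M : ℝ} (hM : ∀ z, |g z| ≤ M) :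
    Tendsto (fun n => ∫ ω, g (Q n ω) ∂P) atTop
      (nhds (∫ z, g z ∂gaussianReal 0 (v / (r ^ 2).toNNReal))) := by
  have hc : Continuous fun p : ℝ × ℝ => p.1 / max p.2 (r / 2) :=
    continuous_fst.div₀ (by fun_prop) fun p => (lt_max_of_lt_right (half_pos hr)).ne'
  have hdist := (hY.continuous_comp_prodMk_of_tendstoInMeasure_const hc hW
    fun n => (hWm n).aemeasurable).tendsto_integral hg hM
  refine tendsto_integral_of_tendsto_measureReal_ne hQm
    (fun n => hc.measurable.comp ((hYm n).prodMk (hWm n))) ?_ hg hM ?_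
  · refine squeeze_zero' (Eventually.of_forall fun _ => measureReal_nonneg) ?_
      (tendstoInMeasure_iff_measureReal_norm.1 hW (r / 2) (half_pos hr))
    filter_upwards [hQ] with n hn
    refine measureReal_mono fun ω hω => ?_
    simp only [Set.mem_ofPred_eq, Real.norm_eq_abs] at hω ⊢
    by_contra hlt
    rw [not_le, abs_lt] at hlt
    refine hω ?_
    change _ = Y n ω / max (W n ω) (r / 2)
    rw [hn ω (by linarith [hlt.1]), max_eq_left (by linarith [hlt.1])]
  · have hmap : (gaussianReal 0 v).map (fun z => id z / max r (r / 2)) =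
        gaussianReal 0 (v / (r ^ 2).toNNReal) := by
      rw [max_eq_left (by linarith)]
      refine (gaussianReal_map_div_const (μ := 0) (v := v) r).trans ?_
      rw [zero_div]
      congr 2
      exact NNReal.eq (Real.coe_toNNReal _ (sq_nonneg r)).symm
    rw [← hmap, integral_map (by fun_prop) hg.aestronglyMeasurable]
    exact hdist

end Ratio

theorem kernelCov_sub_const_mul {E : Type*} [MeasurableSpace E] {ρ : Measure E}
    [IsProbabilityMeasure ρ] {κ : Kernel E E} [IsMarkovKernel κ] (hκ : Kernel.Invariant κ ρ)
    {u s : E → ℝ} (hum : Measurable u) (hu : MemLp u 2 ρ) (hsm : Measurable s) (hs : MemLp s 2 ρ)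
    (c : ℝ) (n : ℕ) :
    kernelCov κ ρ (fun x => u x - c * s x) (fun x => u x - c * s x) n =
      kernelCov κ ρ u u n + c ^ 2 * kernelCov κ ρ s s n -
        c * (kernelCov κ ρ u s n + kernelCov κ ρ s u n) := by
  have hinv := kernelIter_invariant hκ n
  have hui := hu.integrable one_le_two
  have hsi := hs.integrable one_le_two
  have hTu : MemLp (kernelOp κ n u) 2 ρ := (memLp_two_integral_kernel hinv hum hu).1
  have hTs : MemLp (kernelOp κ n s) 2 ρ := (memLp_two_integral_kernel hinv hsm hs).1
  have hop : kernelOp κ n (fun x => u x - c * s x) =ᵐ[ρ]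
      fun x => kernelOp κ n u x - c * kernelOp κ n s x := by
    filter_upwards [ae_integrable_of_invariant hinv hui, ae_integrable_of_invariant hinv hsi]
      with x hux hsx
    simp only [kernelOp]
    rw [integral_sub hux (hsx.const_mul c), integral_const_mul]
  have huu : Integrable (fun x => u x * kernelOp κ n u x) ρ := hu.integrable_mul hTu
  have hus : Integrable (fun x => u x * kernelOp κ n s x) ρ := hu.integrable_mul hTs
  have hsu : Integrable (fun x => s x * kernelOp κ n u x) ρ := hs.integrable_mul hTu
  have hss : Integrable (fun x => s x * kernelOp κ n s x) ρ := hs.integrable_mul hTs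
  have hprod : ∫ x, (u x - c * s x) * kernelOp κ n (fun x => u x - c * s x) x ∂ρ =
      (∫ x, u x * kernelOp κ n u x ∂ρ - c * ∫ x, u x * kernelOp κ n s x ∂ρ) -
      (c * ∫ x, s x * kernelOp κ n u x ∂ρ - c ^ 2 * ∫ x, s x * kernelOp κ n s x ∂ρ) := by
    have h1 : Integrable (fun x => u x * kernelOp κ n u x - c * (u x * kernelOp κ n s x)) ρ :=
      huu.sub (hus.const_mul c)
    have h2 : Integrable
        (fun x => c * (s x * kernelOp κ n u x) - c ^ 2 * (s x * kernelOp κ n s x)) ρ :=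
      (hsu.const_mul c).sub (hss.const_mul _)
    rw [← integral_const_mul, ← integral_const_mul, ← integral_const_mul,
      ← integral_sub huu (hus.const_mul c), ← integral_sub (hsu.const_mul c) (hss.const_mul _),
      ← integral_sub h1 h2]
    refine integral_congr_ae ?_
    filter_upwards [hop] with x hx
    rw [hx]
    ring
  rw [kernelCov, hprod, integral_sub hui (hsi.const_mul c), integral_const_mul]
  simp only [kernelCov]
  ring

theorem measurable_realSign : Measurable Real.sign := by
  unfold Real.sign
  exact Measurable.ite measurableSet_Iio measurable_const
    (Measurable.ite measurableSet_Ioi measurable_const measurable_const)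

theorem abs_realSign_le_one (x : ℝ) : |Real.sign x| ≤ 1 := by
  rcases Real.sign_apply_eq x with h | h | h <;> simp [h]

theorem integrable_abs_rpow_iff_memLp {E : Type*} [MeasurableSpace E] {ρ : Measure E} {u : E → ℝ}
    (hu : Measurable u) {p : ℝ} (hp : 0 < p) :
    Integrable (fun x => |u x| ^ p) ρ ↔ MemLp u (ENNReal.ofReal p) ρ := by
  rw [← integrable_norm_rpow_iff hu.aestronglyMeasurable (by simpa using hp) ENNReal.ofReal_ne_top,
    ENNReal.toReal_ofReal hp.le]
  rfl

theorem integral_withDensity_ofReal_abs_div {E : Type*} [MeasurableSpace E] {μ : Measure E}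
    {w : E → ℝ} (hw : Measurable w) {m : ℝ} (hm : 0 ≤ m) (u : E → ℝ) :
    ∫ x, u x * Real.sign (w x) ∂μ.withDensity (fun x => ENNReal.ofReal (|w x| / m)) =
      (∫ x, u x * w x ∂μ) / m := by
  rw [integral_withDensity_eq_integral_toReal_smul (by fun_prop)
    (ae_of_all _ fun x => ENNReal.ofReal_lt_top), ← integral_div]
  congr with x
  rw [ENNReal.toReal_ofReal (by positivity), smul_eq_mul]
  have : |w x| * Real.sign (w x) = w x := by
    rcases lt_trichotomy (w x) 0 with h | h | h
    · rw [Real.sign_of_neg h, abs_of_neg h]; ring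
    · simp [h]
    · rw [Real.sign_of_pos h, abs_of_pos h]; ring
  nth_rewrite 3 [← this]
  ring

theorem tsum_kernelCov_sub_const_mul {E : Type*} [MeasurableSpace E] {ρ : Measure E}
    [IsProbabilityMeasure ρ] {κ : Kernel E E} [IsMarkovKernel κ] (hκ : Kernel.Invariant κ ρ)
    (hgeo : GeometricallyErgodic κ ρ) {u s : E → ℝ} (hum : Measurable u) (hsm : Measurable s)
    {ε : ℝ} (hε : 0 < ε) (hu : Integrable (fun x => |u x| ^ (2 + ε)) ρ)
    (hs : Integrable (fun x => |s x| ^ (2 + ε)) ρ) (c : ℝ) :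
    ∑' j : ℤ, kernelCov κ ρ (fun x => u x - c * s x) (fun x => u x - c * s x) j.natAbs =
      ∑' j : ℤ, kernelCov κ ρ u u j.natAbs + c ^ 2 * ∑' j : ℤ, kernelCov κ ρ s s j.natAbs -
        c * (∑' j : ℤ, kernelCov κ ρ u s j.natAbs + ∑' j : ℤ, kernelCov κ ρ s u j.natAbs) := by
  have hu2 := memLp_two_of_integrable_rpow hum hε hu
  have hs2 := memLp_two_of_integrable_rpow hsm hε hs
  have huu := summable_natAbs (summable_kernelCov hκ hgeo hu2 hum hε hu)
  have hus := summable_natAbs (summable_kernelCov hκ hgeo hu2 hsm hε hs)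
  have hsu := summable_natAbs (summable_kernelCov hκ hgeo hs2 hum hε hu)
  have hss := summable_natAbs (summable_kernelCov hκ hgeo hs2 hsm hε hs)
  simp_rw [kernelCov_sub_const_mul hκ hum hu2 hsm hs2 c]
  rw [(huu.add (hss.mul_left _)).tsum_sub ((hus.add hsu).mul_left c),
    huu.tsum_add (hss.mul_left _), tsum_mul_left, tsum_mul_left, hus.tsum_add hsu]

/-- CLT for the sign-corrected MCMC estimator: for a geometrically ergodic
stationary chain with invariant density `|π|/∫|π|` and a `2+ε` moment for `h`,
`√n (Î_n − I)` converges weakly to `N(0, σ²(h))` with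
`σ²(h) = (C₁₁ + I²C₂₂ − 2I C₁₂)/r²`. -/
theorem sign_corrected_mcmc_clt
    {Ω E : Type*} [MeasurableSpace Ω] [MeasurableSpace E]
    (P : Measure Ω) [IsProbabilityMeasure P]
    (μ : Measure E) [SigmaFinite μ]
    (π h : E → ℝ) (hπm : Measurable π) (hhm : Measurable h)
    (hπ : Integrable π μ) (hrpos : 0 < ∫ x, π x ∂μ)
    (hh : Integrable (fun x => h x * π x) μ)
    (ρ : Measure E)
    (hρ : ρ = μ.withDensity (fun x => ENNReal.ofReal (|π x| / ∫ y, |π y| ∂μ)))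
    (κ : Kernel E E) [IsMarkovKernel κ]
    (X : ℕ → Ω → E) (hchain : IsMarkovChain P X κ)
    (hstat : ∀ n, P.map (X n) = ρ)
    (hinv : ρ.bind κ = ρ)
    (hgeo : GeometricallyErgodic κ ρ)
    (hmom : ∃ ε : ℝ, 0 < ε ∧ Integrable (fun x => |h x| ^ (2 + ε)) ρ)
    (I r : ℝ)
    (hI : I = (∫ x, h x * π x ∂μ) / ∫ x, π x ∂μ)
    (hr : r = ∫ x, Real.sign (π x) ∂ρ)
    (C11 C22 C12 σ2 : ℝ)
    (hC11 : C11 = ∑' j : ℤ,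
      kernelCov κ ρ (fun x => h x * Real.sign (π x))
        (fun x => h x * Real.sign (π x)) j.natAbs)
    (hC22 : C22 = ∑' j : ℤ,
      kernelCov κ ρ (fun x => Real.sign (π x)) (fun x => Real.sign (π x)) j.natAbs)
    (hC12 : C12 = (1 / 2) *
      ((∑' j : ℤ, kernelCov κ ρ (fun x => h x * Real.sign (π x))
          (fun x => Real.sign (π x)) j.natAbs) +
       (∑' j : ℤ, kernelCov κ ρ (fun x => Real.sign (π x))
          (fun x => h x * Real.sign (π x)) j.natAbs)))
    (hσ2 : σ2 = (C11 + I ^ 2 * C22 - 2 * I * C12) / r ^ 2) :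
    ∀ g : ℝ → ℝ, Continuous g → (∃ M : ℝ, ∀ z : ℝ, |g z| ≤ M) →
      Tendsto (fun n : ℕ => ∫ ω, g (Real.sqrt n *
          ((∑ k ∈ Finset.Icc 1 n, Real.sign (π (X k ω)) * h (X k ω)) /
            (∑ k ∈ Finset.Icc 1 n, Real.sign (π (X k ω))) - I)) ∂P)
        atTop (nhds (∫ z, g z ∂(gaussianReal 0 (Real.toNNReal σ2)))) := by
  intro g hg ⟨M, hM⟩
  obtain ⟨ε, hε, hmom⟩ := hmom
  have hρp : IsProbabilityMeasure ρ :=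
    hstat 0 ▸ Measure.isProbabilityMeasure_map (hchain.1 0).aemeasurable
  have hκ : Kernel.Invariant κ ρ := hinv
  have hm : 0 < ∫ x, |π x| ∂μ :=
    hrpos.trans_le (integral_mono hπ hπ.abs fun x => le_abs_self _)
  have hp : 0 < 2 + ε := by linarith
  set s : E → ℝ := fun x => Real.sign (π x)
  set u : E → ℝ := fun x => h x * Real.sign (π x) with hu_def
  have hsm : Measurable s := measurable_realSign.comp hπm
  have hum : Measurable u := hhm.mul hsm
  have hs1 (x : E) : |s x| ≤ 1 := abs_realSign_le_one _
  have hsL (q : ENNReal) : MemLp s q ρ :=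
    MemLp.of_bound hsm.aestronglyMeasurable 1 (ae_of_all _ hs1)
  have huL : MemLp u (ENNReal.ofReal (2 + ε)) ρ := by
    refine ((integrable_abs_rpow_iff_memLp hhm hp).1 hmom).mono hum.aestronglyMeasurable
      (ae_of_all _ fun x => ?_)
    rw [hu_def, norm_mul]
    exact mul_le_of_le_one_right (norm_nonneg _) (hs1 x)
  have hs_mom := (integrable_abs_rpow_iff_memLp hsm hp).2 (hsL _)
  have hu_mom := (integrable_abs_rpow_iff_memLp hum hp).2 huL
  have hr_eq : r = (∫ x, π x ∂μ) / ∫ x, |π x| ∂μ := by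
    have := integral_withDensity_ofReal_abs_div (μ := μ) hπm hm.le fun _ => 1
    rw [hr]
    simpa only [one_mul, ← hρ] using this
  have hr0 : 0 < r := hr_eq ▸ div_pos hrpos hm
  have hu_int : ∫ x, u x ∂ρ = I * r := by
    have := integral_withDensity_ofReal_abs_div (μ := μ) hπm hm.le h
    rw [← hρ] at this
    rw [hu_def, this, hI, hr_eq]
    field_simp
  have hfm : Measurable fun x => u x - I * s x := hum.sub (hsm.const_mul I)
  have hf_mom : Integrable (fun x => |u x - I * s x| ^ (2 + ε)) ρ :=
    (integrable_abs_rpow_iff_memLp hfm hp).2 (huL.sub ((hsL _).const_mul I))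
  have hf0 : ∫ x, (u x - I * s x) ∂ρ = 0 := by
    rw [integral_sub ((memLp_two_of_integrable_rpow hum hε hu_mom).integrable one_le_two)
      (((hsL 1).integrable le_rfl).const_mul I), integral_const_mul, hu_int, ← hr, sub_self]
  have hσ : σ2 = (∑' j : ℤ, kernelCov κ ρ (fun x => u x - I * s x) (fun x => u x - I * s x)
      j.natAbs) / r ^ 2 := by
    rw [tsum_kernelCov_sub_const_mul hκ hgeo hum hsm hε hu_mom hs_mom, hσ2, hC11, hC22, hC12]
    ring
  have hdm : Measurable fun x => s x - r := hsm.sub_const r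
  have hlln := tendstoInMeasure_chain_average hchain hstat hκ hgeo hdm hε
    ((integrable_abs_rpow_iff_memLp hdm hp).2 ((hsL _).sub (memLp_const r)))
    (by rw [integral_sub ((hsL 1).integrable le_rfl) (integrable_const r), ← hr]; simp)
  have hW : TendstoInMeasure P (fun (n : ℕ) ω => (n : ℝ)⁻¹ * ∑ k ∈ Finset.Icc 1 n, s (X k ω)) atTop
      fun _ => r := by
    rw [tendstoInMeasure_iff_norm] at hlln ⊢
    intro δ hδ
    refine (hlln δ hδ).congr' ?_
    filter_upwards [eventually_gt_atTop 0] with n hn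
    have hn' : (n : ℝ) ≠ 0 := by positivity
    congr with ω
    rw [Finset.sum_sub_distrib, mul_sub, sub_zero]
    simp [hn']
  have hsumm {w : E → ℝ} (hw : Measurable w) (n : ℕ) :
      Measurable fun ω => ∑ k ∈ Finset.Icc 1 n, w (X k ω) :=
    Finset.measurable_sum _ fun k _ => hw.comp (hchain.1 k)
  have hclt := tendstoInDistribution_chain hchain hstat hκ hgeo hfm hε hf_mom hf0
  have hfinal := tendsto_integral_div_of_tendstoInMeasure hr0 hclt
    (fun n => (hsumm hfm n).const_mul _) hW (fun n => (hsumm hsm n).const_mul _)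
    (Q := fun n ω => √n * ((∑ k ∈ Finset.Icc 1 n, s (X k ω) * h (X k ω)) /
      (∑ k ∈ Finset.Icc 1 n, s (X k ω)) - I))
    (fun n => (((hsumm (hsm.mul hhm) n).div (hsumm hsm n)).sub_const I).const_mul _) ?_ hg hM
  · rwa [hσ, Real.toNNReal_div' (sq_nonneg r)]
  · filter_upwards [eventually_gt_atTop 0] with n hn ω hω
    have hn' : (0 : ℝ) < n := by positivity
    have hB : ∑ k ∈ Finset.Icc 1 n, s (X k ω) ≠ 0 := by
      rintro h0
      simp [h0] at hω
    have hA : ∑ k ∈ Finset.Icc 1 n, (u (X k ω) - I * s (X k ω)) =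
        ∑ k ∈ Finset.Icc 1 n, s (X k ω) * h (X k ω) - I * ∑ k ∈ Finset.Icc 1 n, s (X k ω) := by
      rw [Finset.sum_sub_distrib, Finset.mul_sum]
      congr 1
      exact Finset.sum_congr rfl fun k _ => mul_comm _ _
    rw [hA, div_sub' hB]
    have hsq : (n : ℝ)⁻¹ = (√n)⁻¹ * (√n)⁻¹ := by rw [← mul_inv, Real.mul_self_sqrt hn'.le]
    have : √(n : ℝ) ≠ 0 := (Real.sqrt_pos.2 hn').ne'
    rw [hsq]
    field_simp
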